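/- arXiv:1409.4912 — 3 statements merged into one kernel-verified Lean document; each statement's English description precedes it below -/
import Mathlib

section
/- Let b ≥ 2 be an integer. There exists a positive real constant C (depending only on b) such that for every integer n ≥ 3, the sum of the digits of n! in base b satisfies s_b(n!) > C · log n · log log log n (where log denotes the natural logarithm; for 3 ≤ n ≤ e^e the right-hand side is nonpositive and the inequality is understood accordingly). -/
theorem aux_digits_sum_rec (b : ℕ) (hb : 2 ≤ b) (n : ℕ) :
    (Nat.digits b n).sum = n % b + (Nat.digits b (n / b)).sum := by
  rcases Nat.eq_zero_or_pos n with rfl | h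
  · simp
  · rw [Nat.digits_def' (by omega) h]; simp

theorem aux_sub (b : ℕ) (hb : 2 ≤ b) : ∀ N a c : ℕ, a + c ≤ N →
    (Nat.digits b (a + c)).sum ≤ (Nat.digits b a).sum + (Nat.digits b c).sum := by
  -- stronger: also for carries
  have inc : ∀ a : ℕ, (Nat.digits b (a + 1)).sum ≤ (Nat.digits b a).sum + 1 := by
    intro a
    induction a using Nat.strong_induction_on with
    | _ a ih =>
      rw [aux_digits_sum_rec b hb (a + 1), aux_digits_sum_rec b hb a]
      have hlt := Nat.mod_lt a (show 0 < b by omega)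
      have hd := Nat.div_add_mod a b
      by_cases h : a % b + 1 < b
      · have h1 : (a + 1) / b = a / b := by
          rw [Nat.div_eq_iff (by omega)]
          constructor
          · rw [mul_comm]; omega
          · rw [mul_comm]; omega
        have h2 : (a + 1) % b = a % b + 1 := by
          have := Nat.div_add_mod (a + 1) b
          rw [h1] at this; omega
        rw [h1, h2]; omega
      · have h1 : (a + 1) / b = a / b + 1 := by
          have : a + 1 = b * (a / b + 1) := by rw [mul_add]; omega
          rw [this, Nat.mul_div_cancel_left _ (by omega)]
        have h2 : (a + 1) % b = 0 := by
          have : a + 1 = b * (a / b + 1) := by rw [mul_add]; omega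
          rw [this, Nat.mul_mod_right]
        have ha : a / b < a := Nat.div_lt_self (by
          rcases Nat.eq_zero_or_pos a with rfl | h
          · simp at h; omega
          · exact h) (by omega)
        rw [h1, h2]
        have := ih _ ha
        omega
  intro N
  induction N with
  | zero => intro a c h; simp [show a = 0 by omega, show c = 0 by omega]
  | succ N ih =>
    intro a c h
    rcases Nat.eq_zero_or_pos (a + c) with h0 | h0
    · simp [show a = 0 by omega, show c = 0 by omega]
    rw [aux_digits_sum_rec b hb (a + c), aux_digits_sum_rec b hb a, aux_digits_sum_rec b hb c]
    have hlt : (a + c) / b < a + c := Nat.div_lt_self h0 (by omega)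
    have hadd := Nat.add_div (a := a) (b := c) (c := b) (by omega)
    have hmod := Nat.add_mod a c b
    have key := ih (a / b) (c / b)
    split_ifs at hadd with hc
    · have := key (by omega)
      have h3 := inc (a / b + c / b)
      have h4 : (a + c) % b + b = a % b + c % b := by
        rw [hmod, Nat.mod_eq_sub_mod hc, Nat.mod_eq_of_lt]
        · omega
        · have := Nat.mod_lt a (show 0 < b by omega)
          have := Nat.mod_lt c (show 0 < b by omega)
          omega
      rw [hadd]; omega
    · have := key (by omega)
      rw [hadd, hmod, Nat.mod_eq_of_lt (by omega)]
      simp only [add_zero]; omega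

theorem aux_split (b : ℕ) (hb : 2 ≤ b) (k : ℕ) : ∀ m,
    (Nat.digits b m).sum = (Nat.digits b (m % b ^ k)).sum + (Nat.digits b (m / b ^ k)).sum := by
  induction k with
  | zero => intro m; simp [Nat.mod_one]
  | succ k ih =>
    intro m
    rw [aux_digits_sum_rec b hb m, ih (m / b), aux_digits_sum_rec b hb (m % b ^ (k + 1)),
      Nat.div_div_eq_div_mul, pow_succ', Nat.mod_mul_right_mod, Nat.mod_mul_right_div_self, add_assoc]

theorem aux_rep (b : ℕ) (hb : 2 ≤ b) (k : ℕ) : k ≤ (Nat.digits b (b ^ k - 1)).sum := by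
  induction k with
  | zero => simp
  | succ k ih =>
    have h1 : 1 ≤ b ^ k := Nat.one_le_pow _ _ (by omega)
    have e : b ^ (k + 1) - 1 = (b - 1) + b * (b ^ k - 1) := by
      rw [pow_succ', Nat.mul_sub]
      have : b ≤ b * b ^ k := Nat.le_mul_of_pos_right _ h1
      omega
    rw [aux_digits_sum_rec b hb, e, Nat.add_mul_mod_self_left, Nat.add_mul_div_left _ _ (by omega),
      Nat.mod_eq_of_lt (by omega), Nat.div_eq_of_lt (by omega), zero_add]
    omega

theorem aux_stol (b : ℕ) (hb : 2 ≤ b) (k : ℕ) (hk : 0 < k) (m : ℕ) :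
    0 < m → b ^ k - 1 ∣ m → k ≤ (Nat.digits b m).sum := by
  induction m using Nat.strong_induction_on with
  | _ m ih =>
    intro hm hd
    have hbk : 2 ≤ b ^ k := le_trans hb (Nat.le_self_pow (by omega) b)
    by_cases h : m < b ^ k
    · have := Nat.le_of_dvd hm hd
      have : m = b ^ k - 1 := by omega
      rw [this]; exact aux_rep b hb k
    · have hq : 0 < m / b ^ k := Nat.div_pos (by omega) (by omega)
      have hdm := Nat.div_add_mod m (b ^ k)
      have e : m = (b ^ k - 1) * (m / b ^ k) + (m % b ^ k + m / b ^ k) := by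
        rw [Nat.sub_mul]
        have : m / b ^ k ≤ b ^ k * (m / b ^ k) := Nat.le_mul_of_pos_left _ (by omega)
        omega
      have hlt : m % b ^ k + m / b ^ k < m := by
        have : 0 < (b ^ k - 1) * (m / b ^ k) := Nat.mul_pos (by omega) hq
        exact lt_of_lt_of_eq (Nat.lt_add_of_pos_left this) e.symm
      have hd' : b ^ k - 1 ∣ m % b ^ k + m / b ^ k := by
        rw [e] at hd
        exact (Nat.dvd_add_right (Dvd.intro _ rfl)).1 hd
      refine (ih _ hlt (Nat.add_pos_right _ hq) hd').trans ?_
      rw [aux_split b hb k m]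
      exact aux_sub b hb _ _ _ le_rfl

theorem aux_dvd (b : ℕ) (hb : 2 ≤ b) (k n : ℕ) (hk : 0 < k)
    (h : k * (b + 1) ^ k.totient ≤ n) : b ^ k - 1 ∣ n.factorial := by
  set M := (b + 1) ^ k.totient with hM
  have h1 : (((b ^ k - 1 : ℕ)) : ℤ) = ∏ d ∈ k.divisors, (Polynomial.cyclotomic d ℤ).eval (b : ℤ) := by
    rw [← Polynomial.eval_prod, Polynomial.prod_cyclotomic_eq_X_pow_sub_one hk]
    simp [Nat.cast_sub (Nat.one_le_pow k b (by omega))]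
  have h2 : ∀ d ∈ k.divisors, (Polynomial.cyclotomic d ℤ).eval (b : ℤ) ∣ (M.factorial : ℤ) := by
    intro d hd
    have hpos : 0 < (Polynomial.cyclotomic d ℤ).eval (b : ℤ) :=
      Polynomial.cyclotomic_pos' d (by exact_mod_cast hb)
    have hle : (Polynomial.cyclotomic d ℤ).eval (b : ℤ) ≤ M := by
      have := Polynomial.cyclotomic_eval_le_add_one_pow_totient (q := (b : ℝ))
        (by exact_mod_cast hb) d
      have e : (Polynomial.cyclotomic d ℝ).eval (b : ℝ)
          = (((Polynomial.cyclotomic d ℤ).eval (b : ℤ) : ℤ) : ℝ) := by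
        rw [← Polynomial.map_cyclotomic_int d ℝ]
        have := Polynomial.eval_intCast_map (Int.castRingHom ℝ) (Polynomial.cyclotomic d ℤ) (b : ℤ)
        simpa using this
      rw [e] at this
      have h3 : (Polynomial.cyclotomic d ℤ).eval (b : ℤ) ≤ ((b : ℤ) + 1) ^ d.totient := by
        exact_mod_cast this
      refine h3.trans ?_
      rw [hM]; push_cast
      exact pow_le_pow_right₀ (by omega) (Nat.le_of_dvd (Nat.totient_pos.2 hk)
        (Nat.totient_dvd_of_dvd (Nat.dvd_of_mem_divisors hd)))
    obtain ⟨u, hu⟩ := Int.eq_ofNat_of_zero_le hpos.le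
    rw [hu] at hpos hle ⊢
    exact_mod_cast Nat.dvd_factorial (by exact_mod_cast hpos) (by exact_mod_cast hle)
  have h3 : b ^ k - 1 ∣ ∏ _d ∈ k.divisors, M.factorial := by
    have := Finset.prod_dvd_prod_of_dvd _ _ h2
    rw [← h1] at this
    exact_mod_cast this
  refine h3.trans ((Nat.prod_factorial_dvd_factorial_sum _ _).trans (Nat.factorial_dvd_factorial ?_))
  rw [Finset.sum_const, smul_eq_mul]
  exact (Nat.mul_le_mul_right _ (Nat.card_divisors_le_self k)).trans h

theorem aux_totient_mul_le (a j : ℕ) : (a * j).totient ≤ a.totient * j := by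
  revert a
  induction j using Nat.recOnMul with
  | zero => simp
  | one => simp
  | prime p hp =>
    intro a
    rw [mul_comm a p, mul_comm a.totient p]
    by_cases h : p ∣ a
    · rw [Nat.totient_mul_of_prime_of_dvd hp h]
    · rw [Nat.totient_mul_of_prime_of_not_dvd hp h]
      exact Nat.mul_le_mul_right _ (Nat.sub_le _ _)
  | mul x y hx hy =>
    intro a
    rw [← mul_assoc, ← mul_assoc]
    exact (hy _).trans (Nat.mul_le_mul_right _ (hx a))

theorem aux_mertens (y : ℕ) : Real.log (y + 1) * (y.factorial.totient : ℝ) ≤ y.factorial := by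
  set P := y.factorial with hP
  let f : ℕ →* ℝ := ⟨⟨fun n => (n : ℝ)⁻¹, by simp⟩, by intro a c; simp [mul_comm]⟩
  have hf : ∀ {p : ℕ}, p.Prime → ‖f p‖ < 1 := by
    intro p hp
    simp only [f, MonoidHom.coe_mk, OneHom.coe_mk, norm_inv, Real.norm_natCast]
    exact inv_lt_one_of_one_lt₀ (by exact_mod_cast hp.one_lt)
  obtain ⟨hs, hsum⟩ :=
    EulerProduct.summable_and_hasSum_factoredNumbers_prod_filter_prime_geometric hf P.primeFactors
  have hfilt : P.primeFactors.filter Nat.Prime = P.primeFactors :=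
    Finset.filter_true_of_mem fun p hp => Nat.prime_of_mem_primeFactors hp
  rw [hfilt] at hsum
  have hmem : ∀ i ∈ Finset.Icc 1 y, i ∈ Nat.factoredNumbers P.primeFactors := by
    intro i hi
    rw [Finset.mem_Icc] at hi
    refine ⟨by omega, fun p hp => ?_⟩
    have hpp := Nat.prime_of_mem_primeFactorsList hp
    have hpd := Nat.dvd_of_mem_primeFactorsList hp
    rw [Nat.mem_primeFactors]
    exact ⟨hpp, hpd.trans (Nat.dvd_factorial hi.1 hi.2), Nat.factorial_ne_zero _⟩
  have hharm : ((harmonic y : ℚ) : ℝ) ≤ ∏ p ∈ P.primeFactors, (1 - f p)⁻¹ := by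
    have h1 : ((harmonic y : ℚ) : ℝ) = ∑ i ∈ (Finset.Icc 1 y).subtype (· ∈ Nat.factoredNumbers P.primeFactors), f i := by
      rw [Finset.sum_subtype_of_mem (fun i => f i) hmem, harmonic_eq_sum_Icc]
      simp [f]
    rw [h1]
    exact sum_le_hasSum _ (fun i _ => by simp [f]) hsum
  have hlog := (log_add_one_le_harmonic y).trans hharm
  have htot : (P.totient : ℝ) = P * ∏ p ∈ P.primeFactors, (1 - f p) := by
    have := Nat.totient_eq_mul_prod_factors P
    have := congrArg (fun q : ℚ => (q : ℝ)) this
    push_cast at this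
    simpa [f] using this
  have hppos : 0 < ∏ p ∈ P.primeFactors, (1 - f p) :=
    Finset.prod_pos fun p hp => by
      have := hf (Nat.prime_of_mem_primeFactors hp)
      have := (abs_lt.1 this).2
      linarith
  rw [Finset.prod_inv_distrib] at hlog
  rw [htot]
  have := mul_le_mul_of_nonneg_right hlog hppos.le
  rw [inv_mul_cancel₀ hppos.ne'] at this
  have hP0 : (0 : ℝ) ≤ P := by positivity
  push_cast at this
  nlinarith

theorem aux_k (X : ℝ) (hX : 1 < X) : ∃ k : ℕ, 0 < k ∧ (k.totient : ℝ) ≤ X ∧ (k : ℝ) ≤ X ^ 2 ∧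
    X / 4 * Real.log (Real.log X) ≤ k := by
  have hl : 0 < Real.log X := Real.log_pos hX
  set y := ⌊Real.sqrt (Real.log X)⌋₊ with hy
  have hy1 : (y : ℝ) ≤ Real.sqrt (Real.log X) := Nat.floor_le (Real.sqrt_nonneg _)
  have hy2 : Real.sqrt (Real.log X) < y + 1 := Nat.lt_floor_add_one _
  set P := y.factorial with hP
  have hP0 : 0 < P := Nat.factorial_pos _
  have hPX : (P : ℝ) ≤ X := by
    have h1 : (P : ℝ) ≤ (y : ℝ) ^ y := by exact_mod_cast Nat.factorial_le_pow y
    have h2 : (y : ℝ) ≤ Real.exp y := by linarith [Real.add_one_le_exp (y : ℝ)]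
    have h3 : (y : ℝ) ^ y ≤ Real.exp y ^ y := pow_le_pow_left₀ (by positivity) h2 _
    rw [← Real.exp_nat_mul] at h3
    refine h1.trans (h3.trans ?_)
    rw [← Real.le_log_iff_exp_le (by linarith)]
    calc (y : ℝ) * y ≤ Real.sqrt (Real.log X) * Real.sqrt (Real.log X) := by gcongr
      _ = _ := Real.mul_self_sqrt hl.le
  have hφ0 : (0 : ℝ) < P.totient := by exact_mod_cast Nat.totient_pos.2 hP0
  have hφ1 : (1 : ℝ) ≤ P.totient := by exact_mod_cast Nat.totient_pos.2 hP0
  have hφP : (P.totient : ℝ) ≤ P := by exact_mod_cast Nat.totient_le P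
  set j := ⌊X / P.totient⌋₊ with hj
  have hr : 1 ≤ X / P.totient := by rw [le_div_iff₀ hφ0]; linarith
  have hj1 : (j : ℝ) ≤ X / P.totient := Nat.floor_le (by linarith)
  have hj2 : X / P.totient < j + 1 := Nat.lt_floor_add_one _
  have hj0 : 1 ≤ j := (Nat.one_le_floor_iff _).2 hr
  have hj0' : (1 : ℝ) ≤ j := by exact_mod_cast hj0
  rw [le_div_iff₀ hφ0] at hj1
  rw [div_lt_iff₀ hφ0] at hj2
  refine ⟨P * j, by positivity, ?_, ?_, ?_⟩
  · have : ((P * j).totient : ℝ) ≤ P.totient * j := by exact_mod_cast aux_totient_mul_le P j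
    linarith
  · push_cast
    have : (j : ℝ) ≤ X := by nlinarith
    rw [sq]; gcongr
  · push_cast
    have hm := aux_mertens y
    have hlog : Real.log (Real.log X) / 2 ≤ Real.log (y + 1) := by
      rw [← Real.log_sqrt hl.le]
      exact Real.log_le_log (Real.sqrt_pos.2 hl) hy2.le
    have h0 : 0 ≤ Real.log ((y : ℝ) + 1) := Real.log_nonneg (by linarith [(Nat.cast_nonneg y : (0:ℝ) ≤ y)])
    calc X / 4 * Real.log (Real.log X) = X / 2 * (Real.log (Real.log X) / 2) := by ring
      _ ≤ X / 2 * Real.log (y + 1) := by gcongr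
      _ ≤ (P.totient * j) * Real.log (y + 1) := by gcongr; nlinarith
      _ = (Real.log (y + 1) * P.totient) * j := by ring
      _ ≤ P * j := by gcongr

theorem aux_large (b : ℕ) (hb : 2 ≤ b) : ∃ c : ℝ, 0 < c ∧ ∀ᶠ n : ℕ in Filter.atTop,
      c * (Real.log n * Real.log (Real.log (Real.log n))) <
        ((Nat.digits b (Nat.factorial n)).sum : ℝ) := by
  have hlb : 0 < Real.log (b + 1) := Real.log_pos (by norm_cast; omega)
  set c : ℝ := 1 / (2 * Real.log (b + 1)) with hc
  have hc0 : 0 < c := by positivity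
  have hL : Filter.Tendsto (fun n : ℕ => Real.log n) Filter.atTop Filter.atTop :=
    Real.tendsto_log_atTop.comp tendsto_natCast_atTop_atTop
  have hLL := Real.tendsto_log_atTop.comp hL
  have hLLL := Real.tendsto_log_atTop.comp hLL
  have hsq : ∀ᶠ L : ℝ in Filter.atTop, ‖L ^ 2‖ ≤ (1 / c ^ 2) * ‖Real.exp (1 / 2 * L)‖ := by
    exact ((isLittleO_pow_exp_pos_mul_atTop 2 (by norm_num : (0 : ℝ) < 1 / 2)).bound (by positivity))
  refine ⟨c / 16, by positivity, ?_⟩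
  filter_upwards [hL.eventually hsq, hL.eventually_ge_atTop (1 / c ^ 2), hL.eventually_gt_atTop (1 / c),
    hL.eventually_gt_atTop 1, hLLL.eventually_ge_atTop (2 * Real.log 2), Filter.eventually_ge_atTop 1]
    with n h1 h2 h3 h4 h5 h6
  simp only [Function.comp] at h5
  set L := Real.log n with hLdef
  have hn0 : (0 : ℝ) < n := by exact_mod_cast h6
  have hX : 1 < c * L := by rwa [div_lt_iff₀' hc0] at h3
  obtain ⟨k, hk0, hk1, hk2, hk3⟩ := aux_k (c * L) hX
  have hl2 : 0 < Real.log 2 := Real.log_pos (by norm_num)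
  have hLlog : 0 < Real.log L := Real.log_pos h4
  have hlogX : Real.log L / 2 ≤ Real.log (c * L) := by
    rw [← Real.log_sqrt (by linarith)]
    apply Real.log_le_log (Real.sqrt_pos.2 (by linarith))
    rw [Real.sqrt_le_iff]
    refine ⟨by linarith, ?_⟩
    rw [div_le_iff₀ (by positivity)] at h2
    nlinarith
  have hloglog : Real.log (Real.log L) / 2 ≤ Real.log (Real.log (c * L)) := by
    have := Real.log_le_log (by positivity) hlogX
    rw [Real.log_div hLlog.ne' (by norm_num)] at this
    linarith
  have hexp : Real.exp (1 / 2 * L) * Real.exp (1 / 2 * L) = n := by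
    rw [← Real.exp_add, ← Real.exp_log hn0]; congr 1; ring
  have hkn : k * (b + 1) ^ k.totient ≤ n := by
    have e1 : (k : ℝ) ≤ Real.exp (1 / 2 * L) := by
      refine hk2.trans ?_
      rw [Real.norm_of_nonneg (by positivity), Real.norm_of_nonneg (by positivity)] at h1
      calc (c * L) ^ 2 = c ^ 2 * L ^ 2 := by ring
        _ ≤ c ^ 2 * (1 / c ^ 2 * Real.exp (1 / 2 * L)) := by gcongr
        _ = _ := by field_simp
    have e2 : ((b : ℝ) + 1) ^ k.totient ≤ Real.exp (1 / 2 * L) := by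
      rw [← Real.log_le_iff_le_exp (by positivity), Real.log_pow]
      calc (k.totient : ℝ) * Real.log (b + 1) ≤ c * L * Real.log (b + 1) := by gcongr
        _ = 1 / 2 * L := by rw [hc]; field_simp
    have : (k : ℝ) * ((b : ℝ) + 1) ^ k.totient ≤ n := by
      rw [← hexp]; gcongr
    exact_mod_cast this
  have hs := aux_stol b hb k hk0 _ (Nat.factorial_pos n) (aux_dvd b hb k n hk0 hkn)
  have hs' : (k : ℝ) ≤ ((Nat.digits b (Nat.factorial n)).sum : ℝ) := by exact_mod_cast hs
  refine lt_of_lt_of_le ?_ (hk3.trans hs')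
  have hpos : 0 < c * (L * Real.log (Real.log L)) := by
    have : 0 < Real.log (Real.log L) := by linarith
    have : 0 < L := by linarith
    positivity
  calc c / 16 * (L * Real.log (Real.log L)) < c * L / 4 * (Real.log (Real.log L) / 2) := by linarith
    _ ≤ _ := by gcongr

/-- For each integer `b ≥ 2` there is a constant `C > 0` (depending only on `b`)
such that `s_b(n!) > C * log n * log log log n` for every integer `n ≥ 3`. -/
theorem sum_digits_factorial_gt (b : ℕ) (hb : 2 ≤ b) :
    ∃ C : ℝ, 0 < C ∧ ∀ n : ℕ, 3 ≤ n →
      C * Real.log n * Real.log (Real.log (Real.log n)) <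
        ((Nat.digits b (Nat.factorial n)).sum : ℝ) := by
  obtain ⟨c, hc, hev⟩ := aux_large b hb
  obtain ⟨N, hN⟩ := Filter.eventually_atTop.1 hev
  set v : ℕ → ℝ := fun n => Real.log n * Real.log (Real.log (Real.log n)) with hv
  set B : ℝ := ∑ n ∈ Finset.range N, |v n| with hB
  have hB0 : 0 ≤ B := Finset.sum_nonneg fun _ _ => abs_nonneg _
  refine ⟨min c (1 / (1 + B)), by positivity, fun n _ => ?_⟩
  rw [mul_assoc]
  change min c (1 / (1 + B)) * v n < _
  have hs : (1 : ℝ) ≤ ((Nat.digits b (Nat.factorial n)).sum : ℝ) := by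
    have h0 : (Nat.digits b n.factorial).sum ≠ 0 := by
      intro h
      have h2 : ∀ x ∈ Nat.digits b n.factorial, x = 0 := by
        exact List.sum_eq_zero_iff_forall_eq_nat.1 h
      have h3 := Nat.getLast_digit_ne_zero b (Nat.factorial_ne_zero n)
      exact h3 (h2 _ (List.getLast_mem _))
    exact_mod_cast Nat.one_le_iff_ne_zero.2 h0
  rcases le_or_gt (v n) 0 with h | h
  · have : min c (1 / (1 + B)) * v n ≤ 0 := mul_nonpos_of_nonneg_of_nonpos (by positivity) h
    linarith
  · rcases le_or_gt N n with hn | hn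
    · exact lt_of_le_of_lt (mul_le_mul_of_nonneg_right (min_le_left _ _) h.le) (hN n hn)
    · refine lt_of_lt_of_le ?_ hs
      have h1 : |v n| ≤ B := Finset.single_le_sum (f := fun n => |v n|)
        (fun _ _ => abs_nonneg _) (Finset.mem_range.2 hn)
      have h2 : v n ≤ B := (le_abs_self _).trans h1
      refine lt_of_le_of_lt (mul_le_mul_of_nonneg_right (min_le_right _ _) h.le) ?_
      rw [one_div, inv_mul_lt_iff₀ (by linarith)]
      linarith
end

section
/- Let b ≥ 2 be an integer. There exists a positive real constant C (depending only on b) such that for every integer n ≥ 3, the sum of the digits of Λ_n := lcm(1, 2, …, n) in base b satisfies s_b(Λ_n) > C · log n · log log log n (where log denotes the natural logarithm; for 3 ≤ n ≤ e^e the right-hand side is nonpositive and the inequality is understood accordingly). -/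
lemma sd_step (b : ℕ) (hb : 2 ≤ b) (z : ℕ) :
    (Nat.digits b z).sum = z % b + (Nat.digits b (z / b)).sum := by
  rcases Nat.eq_zero_or_pos z with rfl | hz
  · simp
  · rw [Nat.digits_def' (by omega) hz]; simp

lemma sd_succ (b : ℕ) (hb : 2 ≤ b) (z : ℕ) :
    (Nat.digits b (z + 1)).sum ≤ (Nat.digits b z).sum + 1 := by
  induction z using Nat.strong_induction_on with
  | _ z ih =>
    rw [sd_step b hb (z + 1), sd_step b hb z]
    have h1 : z = b * (z / b) + z % b := (Nat.div_add_mod z b).symm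
    have hlt : z % b < b := Nat.mod_lt _ (by omega)
    by_cases hc : z % b + 1 < b
    · have e : z + 1 = (z % b + 1) + b * (z / b) := by omega
      have e1 : (z + 1) / b = z / b := by
        rw [e, Nat.add_mul_div_left _ _ (by omega), Nat.div_eq_of_lt hc]; simp
      have e2 : (z + 1) % b = z % b + 1 := by
        rw [e, Nat.add_mul_mod_self_left, Nat.mod_eq_of_lt hc]
      rw [e1, e2]; omega
    · have e : z + 1 = 0 + b * (z / b + 1) := by rw [mul_add]; omega
      have e1 : (z + 1) / b = z / b + 1 := by
        rw [e, Nat.add_mul_div_left _ _ (by omega)]; simp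
      have e2 : (z + 1) % b = 0 := by
        rw [e, Nat.add_mul_mod_self_left]; simp
      rw [e1, e2]
      have hz : 0 < z := by
        rcases Nat.eq_zero_or_pos z with rfl | h
        · simp at hc; omega
        · exact h
      have := ih (z / b) (Nat.div_lt_self hz (by omega))
      omega

lemma sd_add (b : ℕ) (hb : 2 ≤ b) (x : ℕ) : ∀ y : ℕ,
    (Nat.digits b (x + y)).sum ≤ (Nat.digits b x).sum + (Nat.digits b y).sum := by
  induction x using Nat.strong_induction_on with
  | _ x ih =>
    intro y
    rcases Nat.eq_zero_or_pos x with rfl | hx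
    · simp
    rw [sd_step b hb (x + y), sd_step b hb x, sd_step b hb y]
    have h1 : x = b * (x / b) + x % b := (Nat.div_add_mod x b).symm
    have h2 : y = b * (y / b) + y % b := (Nat.div_add_mod y b).symm
    have hlt : x % b < b := Nat.mod_lt _ (by omega)
    have hlt' : y % b < b := Nat.mod_lt _ (by omega)
    have hi := ih (x / b) (Nat.div_lt_self hx (by omega)) (y / b)
    by_cases hc : x % b + y % b < b
    · have e : x + y = (x % b + y % b) + b * (x / b + y / b) := by rw [mul_add]; omega
      have e1 : (x + y) / b = x / b + y / b := by
        rw [e, Nat.add_mul_div_left _ _ (by omega), Nat.div_eq_of_lt hc]; simp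
      have e2 : (x + y) % b = x % b + y % b := by
        rw [e, Nat.add_mul_mod_self_left, Nat.mod_eq_of_lt hc]
      rw [e1, e2]; omega
    · have e : x + y = (x % b + y % b - b) + b * (x / b + y / b + 1) := by
        rw [mul_add, mul_add]; omega
      have hc' : x % b + y % b - b < b := by omega
      have e1 : (x + y) / b = x / b + y / b + 1 := by
        rw [e, Nat.add_mul_div_left _ _ (by omega), Nat.div_eq_of_lt hc']; simp
      have e2 : (x + y) % b = x % b + y % b - b := by
        rw [e, Nat.add_mul_mod_self_left, Nat.mod_eq_of_lt hc']
      rw [e1, e2]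
      have := sd_succ b hb (x / b + y / b)
      omega

lemma sd_split (b : ℕ) (hb : 2 ≤ b) (m : ℕ) : ∀ z : ℕ,
    (Nat.digits b z).sum = (Nat.digits b (z % b ^ m)).sum + (Nat.digits b (z / b ^ m)).sum := by
  induction m with
  | zero => intro z; simp [Nat.mod_one]
  | succ m ih =>
    intro z
    rw [sd_step b hb z, sd_step b hb (z % b ^ (m + 1)), ih (z / b), pow_succ',
      Nat.mod_mul_right_mod, Nat.mod_mul_right_div_self, Nat.div_div_eq_div_mul]
    ring

lemma sd_pow_sub_one (b : ℕ) (hb : 2 ≤ b) (m : ℕ) : m ≤ (Nat.digits b (b ^ m - 1)).sum := by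
  induction m with
  | zero => simp
  | succ m ih =>
    have hpos : 0 < b ^ m := by positivity
    have e : b ^ (m + 1) - 1 = (b - 1) + b * (b ^ m - 1) := by
      have : b * (b ^ m - 1) = b ^ (m + 1) - b := by rw [Nat.mul_sub, pow_succ']; simp
      have : b ≤ b ^ (m + 1) := by rw [pow_succ']; exact Nat.le_mul_of_pos_right _ hpos
      omega
    rw [sd_step b hb, e, Nat.add_mul_div_left _ _ (by omega), Nat.add_mul_mod_self_left,
      Nat.mod_eq_of_lt (by omega), Nat.div_eq_of_lt (by omega), zero_add]
    omega

lemma sd_dvd (b : ℕ) (hb : 2 ≤ b) (m : ℕ) (hm : 0 < m) (N : ℕ) : 0 < N → b ^ m - 1 ∣ N →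
    m ≤ (Nat.digits b N).sum := by
  induction N using Nat.strong_induction_on with
  | _ N ih =>
    intro hN hd
    have hb1 : 2 ≤ b ^ m := le_trans hb (Nat.le_self_pow hm.ne' b)
    have h1 := Nat.div_add_mod N (b ^ m)
    by_cases hlt : N < b ^ m
    · have := Nat.le_of_dvd hN hd
      have : N = b ^ m - 1 := by omega
      rw [this]; exact sd_pow_sub_one b hb m
    · have hq : 0 < N / b ^ m := Nat.div_pos (by omega) (by omega)
      have e : N = (b ^ m - 1) * (N / b ^ m) + (N % b ^ m + N / b ^ m) := by
        have : b ^ m * (N / b ^ m) = (b ^ m - 1) * (N / b ^ m) + N / b ^ m := by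
          conv_lhs => rw [show b ^ m = (b ^ m - 1) + 1 by omega, add_mul, one_mul]
          simp [show b ^ m - 1 + 1 = b ^ m by omega]
        omega
      have hpos : 0 < (b ^ m - 1) * (N / b ^ m) := Nat.mul_pos (by omega) hq
      have hd' : b ^ m - 1 ∣ N % b ^ m + N / b ^ m := by
        rw [e] at hd
        exact (Nat.dvd_add_right (Dvd.intro _ rfl)).1 hd
      have := ih (N % b ^ m + N / b ^ m) (by omega)
        (Nat.add_pos_right _ hq) hd'
      rw [sd_split b hb m N]
      exact this.trans (sd_add b hb _ _)


lemma pp_not_dvd (b m p k n : ℕ) (hb : 2 ≤ b) (hm : 0 < m) (hp : p.Prime) (hpm : ¬ p ∣ m)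
    (hφ : (b + 1) ^ m.totient ≤ n) (hd : p ^ k ∣ b ^ m - 1) : p ^ k ≤ n := by
  have hn : 1 ≤ n := le_trans (Nat.one_le_pow _ _ (by omega)) hφ
  rcases Nat.eq_zero_or_pos k with rfl | hk
  · simpa using hn
  have : Fact p.Prime := ⟨hp⟩
  have hpZ : Prime (p : ℤ) := Nat.prime_iff_prime_int.1 hp
  have h1 : ((p : ℤ)) ^ k ∣ ∏ i ∈ m.divisors, (Polynomial.cyclotomic i ℤ).eval (b : ℤ) := by
    rw [← Polynomial.eval_prod, Polynomial.prod_cyclotomic_eq_X_pow_sub_one hm]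
    simp only [Polynomial.eval_sub, Polynomial.eval_pow, Polynomial.eval_X, Polynomial.eval_one]
    have : ((p ^ k : ℕ) : ℤ) ∣ ((b ^ m - 1 : ℕ) : ℤ) := Int.natCast_dvd_natCast.2 hd
    rw [Nat.cast_sub (Nat.one_le_pow _ _ (by omega))] at this
    simpa using this
  have hroot : ∀ d ∈ m.divisors, (p : ℤ) ∣ (Polynomial.cyclotomic d ℤ).eval (b : ℤ) →
      d = orderOf (b : ZMod p) := by
    intro d hdm hdv
    have hdm' := Nat.dvd_of_mem_divisors hdm
    have : NeZero (d : ZMod p) := ⟨by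
      rw [Ne, ZMod.natCast_eq_zero_iff]
      exact fun h => hpm (h.trans hdm')⟩
    have : (Polynomial.cyclotomic d (ZMod p)).IsRoot (b : ZMod p) := by
      rw [Polynomial.IsRoot.def, ← Polynomial.map_cyclotomic_int d (ZMod p)]
      have h2 : ((b : ℤ) : ZMod p) = (b : ZMod p) := by simp
      rw [← h2, Polynomial.eval_intCast_map]
      simpa using (ZMod.intCast_zmod_eq_zero_iff_dvd _ p).2 hdv
    exact (Polynomial.isRoot_cyclotomic_iff.1 this).eq_orderOf
  obtain ⟨d, hdm, hpd⟩ := (Prime.dvd_finsetProd_iff hpZ _).1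
    ((dvd_pow_self (p : ℤ) hk.ne').trans h1)
  have h3 : (p : ℤ) ^ k ∣ (Polynomial.cyclotomic d ℤ).eval (b : ℤ) := by
    rw [← Finset.mul_prod_erase _ _ hdm] at h1
    refine IsCoprime.dvd_of_dvd_mul_right ?_ h1
    apply IsCoprime.pow_left
    apply IsCoprime.prod_right
    intro e he
    rw [Finset.mem_erase] at he
    rw [Prime.coprime_iff_not_dvd hpZ]
    intro h
    exact he.1 ((hroot e he.2 h).trans (hroot d hdm hpd).symm)
  have hpos : 0 < (Polynomial.cyclotomic d ℤ).eval (b : ℤ) :=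
    Polynomial.cyclotomic_pos' d (by exact_mod_cast hb)
  have hle := Int.le_of_dvd hpos h3
  have hle2 : (((Polynomial.cyclotomic d ℤ).eval (b : ℤ) : ℤ) : ℝ) ≤ ((b : ℝ) + 1) ^ d.totient := by
    have := Polynomial.cyclotomic_eval_le_add_one_pow_totient
      (q := (b : ℝ)) (by exact_mod_cast hb) d
    rw [← Polynomial.map_cyclotomic_int d ℝ] at this
    have h2 : ((b : ℤ) : ℝ) = (b : ℝ) := by simp
    rw [← h2, Polynomial.eval_intCast_map] at this
    simpa using this
  have h4 : p ^ k ≤ (b + 1) ^ d.totient := by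
    have : ((p ^ k : ℕ) : ℝ) ≤ (((b + 1) ^ d.totient : ℕ) : ℝ) := by
      push_cast
      refine le_trans ?_ hle2
      exact_mod_cast hle
    exact_mod_cast this
  have h5 : d.totient ≤ m.totient := Nat.le_of_dvd (Nat.totient_pos.2 hm)
    (Nat.totient_dvd_of_dvd (Nat.dvd_of_mem_divisors hdm))
  exact h4.trans ((Nat.pow_le_pow_right (by omega) h5).trans hφ)

lemma pp_dvd (b m p k n : ℕ) (hb : 2 ≤ b) (hm : 0 < m) (hp : p.Prime) (hodd : Odd m)
    (hpm : p ∣ m) (hn : m * b ^ p ≤ n) (hd : p ^ k ∣ b ^ m - 1) : p ^ k ≤ n := by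
  have : Fact p.Prime := ⟨hp⟩
  have hb1 : ∀ j, 1 ≤ b ^ j := fun j => Nat.one_le_pow _ _ (by omega)
  have hmp : 1 ≤ m * b ^ p := Nat.mul_pos hm (hb1 p)
  rcases Nat.eq_zero_or_pos k with rfl | hk
  · simpa using hmp.trans hn
  have hpodd : Odd p := hodd.of_dvd_nat hpm
  have hpb : ¬ p ∣ b := by
    intro h
    have h1 : p ∣ b ^ m := h.trans (dvd_pow_self b hm.ne')
    have h2 : p ∣ b ^ m - 1 := (dvd_pow_self p hk.ne').trans hd
    have h3 := (Nat.dvd_sub_iff_right (hb1 m) h1).1 h2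
    exact hp.one_lt.ne' (Nat.dvd_one.1 h3)
  have hp1 : p - 1 ≠ 0 := by have := hp.two_le; omega
  have hx : 1 < b ^ (p - 1) := Nat.one_lt_pow hp1 (by omega)
  have hf : p ∣ b ^ (p - 1) - 1 := by
    have := ZMod.pow_card_sub_one_eq_one (p := p) (a := (b : ZMod p))
      (by rwa [Ne, ZMod.natCast_eq_zero_iff])
    rw [← ZMod.natCast_eq_zero_iff, Nat.cast_sub (hb1 _)]
    simp [this]
  have hl := padicValNat.pow_sub_pow hpodd hx hf (fun h => hpb (hp.dvd_of_dvd_pow h)) hm.ne'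
  have hd2 : p ^ k ∣ (b ^ (p - 1)) ^ m - 1 ^ m := by
    rw [← pow_mul, mul_comm, pow_mul]
    rw [one_pow]
    exact hd.trans (by simpa using Nat.sub_dvd_pow_sub_pow (b ^ m) 1 (p - 1))
  have hne : (b ^ (p - 1)) ^ m - 1 ^ m ≠ 0 := by
    have := Nat.one_lt_pow hm.ne' hx
    rw [one_pow]; omega
  rw [padicValNat_dvd_iff_le hne, hl, ← padicValNat.mul (by omega) hm.ne',
    ← padicValNat_dvd_iff_le (Nat.mul_ne_zero (by omega) hm.ne')] at hd2
  refine (Nat.le_of_dvd (Nat.mul_pos (by omega) hm) hd2).trans (le_trans ?_ hn)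
  rw [mul_comm]
  apply Nat.mul_le_mul_left
  exact (Nat.sub_le _ _).trans (Nat.pow_le_pow_right (by omega) (by omega))

lemma key_dvd (b m n : ℕ) (hb : 2 ≤ b) (hm : 0 < m) (hodd : Odd m)
    (hφ : (b + 1) ^ m.totient ≤ n) (hn : ∀ p, p.Prime → p ∣ m → m * b ^ p ≤ n) :
    b ^ m - 1 ∣ (Finset.Icc 1 n).lcm id := by
  rw [Nat.dvd_iff_prime_pow_dvd_dvd]
  intro p k hp hd
  have : p ^ k ≤ n := by
    by_cases h : p ∣ m
    · exact pp_dvd b m p k n hb hm hp hodd h (hn p hp h) hd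
    · exact pp_not_dvd b m p k n hb hm hp h hφ hd
  exact Finset.dvd_lcm (f := id) (Finset.mem_Icc.2 ⟨Nat.one_le_pow _ _ hp.pos, this⟩)

lemma euler_log (y : ℕ) : Real.log ((y + 1 : ℕ) : ℝ) ≤
    ∏ p ∈ (y + 1).primesBelow, (1 - (p : ℝ)⁻¹)⁻¹ := by
  let f : ℕ →* ℝ := ⟨⟨fun n => (n : ℝ)⁻¹, by simp⟩, by intro a b; simp [mul_comm]⟩
  have hf : ∀ n, f n = (n : ℝ)⁻¹ := fun n => rfl
  have h := (EulerProduct.summable_and_hasSum_smoothNumbers_prod_primesBelow_geometric (f := f)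
    (fun {p} hp => by
      rw [hf, norm_inv, Real.norm_natCast]
      exact inv_lt_one_of_one_lt₀ (by exact_mod_cast hp.one_lt)) (y + 1)).2
  have h2 : ∑ i ∈ Finset.Icc 1 y, (i : ℝ)⁻¹ ≤ ∏ p ∈ (y + 1).primesBelow, (1 - f p)⁻¹ := by
    classical
    have h3 := sum_le_hasSum ((Finset.Icc 1 y).subtype (· ∈ (y + 1).smoothNumbers))
      (fun i _ => by rw [hf]; positivity) h
    refine le_trans (le_of_eq ?_) h3
    rw [Finset.sum_subtype_of_mem (f := fun i : ℕ => f i)]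
    · rfl
    · intro i hi
      rw [Finset.mem_Icc] at hi
      exact Nat.mem_smoothNumbers_of_lt (by omega) (by omega)
  refine (log_add_one_le_harmonic y).trans (le_trans (le_of_eq ?_) h2)
  rw [harmonic_eq_sum_Icc]; push_cast; rfl

/-- product of the odd primes up to `y` -/
def oddP (y : ℕ) : ℕ := ∏ p ∈ (y + 1).primesBelow.erase 2, p

lemma oddP_prime {y p : ℕ} (hp : p ∈ (y + 1).primesBelow.erase 2) : p.Prime :=
  Nat.prime_of_mem_primesBelow (Finset.mem_of_mem_erase hp)

lemma oddP_pos (y : ℕ) : 0 < oddP y := Finset.prod_pos fun _ hp => (oddP_prime hp).pos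

lemma oddP_primeFactors (y : ℕ) : (oddP y).primeFactors = (y + 1).primesBelow.erase 2 :=
  Nat.primeFactors_prod fun _ hp => oddP_prime hp

lemma oddP_le (y : ℕ) : oddP y ≤ 4 ^ y := by
  refine le_trans ?_ (primorial_le_four_pow y)
  refine Finset.prod_le_prod_of_subset_of_one_le' (Finset.erase_subset _ _) ?_
  intro p hp _
  exact (Nat.prime_of_mem_primesBelow hp).pos

lemma oddP_odd (y : ℕ) : Odd (oddP y) := by
  rw [← Nat.not_even_iff_odd, even_iff_two_dvd]
  intro h
  have : 2 ∈ (oddP y).primeFactors := Nat.mem_primeFactors.2 ⟨Nat.prime_two, h, (oddP_pos y).ne'⟩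
  rw [oddP_primeFactors] at this
  simp at this

lemma oddP_dvd (y p : ℕ) (hp : p.Prime) (h : p ∣ oddP y) : p ≤ y := by
  have : p ∈ (oddP y).primeFactors := Nat.mem_primeFactors.2 ⟨hp, h, (oddP_pos y).ne'⟩
  rw [oddP_primeFactors] at this
  have := Nat.lt_of_mem_primesBelow (Finset.mem_of_mem_erase this)
  omega

lemma three_dvd_oddP (y : ℕ) (hy : 3 ≤ y) : 3 ∣ oddP y := by
  apply Finset.dvd_prod_of_mem (fun p => p)
  rw [Finset.mem_erase, Nat.mem_primesBelow]
  exact ⟨by norm_num, by omega, Nat.prime_three⟩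

lemma oddP_ratio (y : ℕ) (hy : 3 ≤ y) :
    Real.log ((y + 1 : ℕ) : ℝ) * ((oddP y).totient : ℝ) ≤ 2 * (oddP y : ℝ) := by
  have h1 := euler_log y
  have h2 : 2 ∈ (y + 1).primesBelow := Nat.mem_primesBelow.2 ⟨by omega, Nat.prime_two⟩
  rw [← Finset.mul_prod_erase _ _ h2] at h1
  have h3 : ((oddP y).totient : ℝ) =
      (oddP y : ℝ) * ∏ p ∈ (y + 1).primesBelow.erase 2, (1 - (p : ℝ)⁻¹) := by
    have := Nat.totient_eq_mul_prod_factors (oddP y)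
    rw [oddP_primeFactors] at this
    have := congrArg (fun q : ℚ => (q : ℝ)) this
    push_cast at this
    exact this
  have h4 : 0 < ∏ p ∈ (y + 1).primesBelow.erase 2, (1 - (p : ℝ)⁻¹) := by
    apply Finset.prod_pos
    intro p hp
    have : (p : ℝ)⁻¹ < 1 := inv_lt_one_of_one_lt₀ (by exact_mod_cast (oddP_prime hp).one_lt)
    linarith
  rw [Finset.prod_inv_distrib] at h1
  set A := ∏ p ∈ (y + 1).primesBelow.erase 2, (1 - (p : ℝ)⁻¹)
  rw [h3]
  have h5 : (1 - ((2 : ℕ) : ℝ)⁻¹)⁻¹ = 2 := by norm_num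
  rw [h5] at h1
  have h6 : (0 : ℝ) < oddP y := by exact_mod_cast oddP_pos y
  calc _ ≤ (2 * A⁻¹) * ((oddP y : ℝ) * A) := by gcongr
    _ = 2 * (oddP y : ℝ) := by field_simp

lemma totient_three_pow (P j : ℕ) (h : 3 ∣ P) : (3 ^ j * P).totient = 3 ^ j * P.totient := by
  induction j with
  | zero => simp
  | succ j ih =>
    rw [pow_succ', mul_assoc, Nat.totient_mul_of_prime_of_dvd Nat.prime_three
      (h.trans (Dvd.intro_left _ rfl)), ih, mul_assoc]

lemma sq_le_three_pow (L : ℕ) : L * L ≤ 3 ^ L := by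
  induction L with
  | zero => simp
  | succ L ih =>
    rcases Nat.lt_or_ge L 2 with h | h
    · interval_cases L <;> norm_num
    · rw [pow_succ]; nlinarith

lemma exists_m (b L y n : ℕ) (hb : 2 ≤ b) (hL : (b + 1) ^ L ≤ n) (hy : 3 ≤ y)
    (hyL : (4 * b) ^ y ≤ L) :
    ∃ m : ℕ, 0 < m ∧ b ^ m - 1 ∣ (Finset.Icc 1 n).lcm id ∧
      (L : ℝ) * Real.log ((y + 1 : ℕ) : ℝ) ≤ 6 * m := by
  have hT : 0 < (oddP y).totient := Nat.totient_pos.2 (oddP_pos y)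
  have hTL : (oddP y).totient ≤ L :=
    (Nat.totient_le _).trans ((oddP_le y).trans ((Nat.pow_le_pow_left (by omega) y).trans hyL))
  set T := (oddP y).totient with hTdef
  set j := Nat.log 3 (L / T) with hj
  have hq : L / T ≠ 0 := (Nat.div_pos hTL hT).ne'
  have h1 : 3 ^ j * T ≤ L := (Nat.le_div_iff_mul_le hT).1 (Nat.pow_log_le_self 3 hq)
  have h2 : L < 3 ^ (j + 1) * T :=
    (Nat.div_lt_iff_lt_mul hT).1 (Nat.lt_pow_succ_log_self (by norm_num) _)
  have h3 := three_dvd_oddP y hy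
  have hm : 0 < 3 ^ j * oddP y := Nat.mul_pos (by positivity) (oddP_pos y)
  refine ⟨3 ^ j * oddP y, hm, ?_, ?_⟩
  · apply key_dvd b _ n hb hm
    · exact (Odd.pow (by decide)).mul (oddP_odd y)
    · rw [totient_three_pow _ _ h3]
      exact (Nat.pow_le_pow_right (by omega) h1).trans hL
    · intro p hp hpd
      have hpy : p ≤ y := by
        rcases (Nat.Prime.dvd_mul hp).1 hpd with h | h
        · have := Nat.le_of_dvd (by norm_num) (hp.dvd_of_dvd_pow h); omega
        · exact oddP_dvd y p hp h
      have h3j : 3 ^ j ≤ L := (Nat.le_mul_of_pos_right _ hT).trans h1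
      calc 3 ^ j * oddP y * b ^ p ≤ L * 4 ^ y * b ^ y :=
            Nat.mul_le_mul (Nat.mul_le_mul h3j (oddP_le y)) (Nat.pow_le_pow_right (by omega) hpy)
        _ = L * (4 * b) ^ y := by rw [mul_pow, mul_assoc]
        _ ≤ L * L := Nat.mul_le_mul_left _ hyL
        _ ≤ 3 ^ L := sq_le_three_pow L
        _ ≤ (b + 1) ^ L := Nat.pow_le_pow_left (by omega) _
        _ ≤ n := hL
  · have hr := oddP_ratio y hy
    rw [← hTdef] at hr
    have h2' : (L : ℝ) ≤ 3 * 3 ^ j * T := by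
      have : (L : ℝ) ≤ ((3 ^ (j + 1) * T : ℕ) : ℝ) := by exact_mod_cast h2.le
      push_cast at this
      rw [pow_succ'] at this; exact this
    have hlog : 0 ≤ Real.log ((y + 1 : ℕ) : ℝ) := Real.log_natCast_nonneg _
    push_cast at *
    calc _ ≤ (3 * 3 ^ j * (T : ℝ)) * Real.log ((y : ℝ) + 1) := by gcongr
      _ = 3 * 3 ^ j * (Real.log ((y : ℝ) + 1) * T) := by ring
      _ ≤ 3 * 3 ^ j * (2 * (oddP y : ℝ)) := by gcongr
      _ = _ := by ring

lemma eventually_bound (b : ℕ) (hb : 2 ≤ b) : ∃ C : ℝ, 0 < C ∧ ∀ᶠ n : ℕ in Filter.atTop,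
    C * (Real.log n * Real.log (Real.log (Real.log n))) ≤
        ((Nat.digits b ((Finset.Icc 1 n).lcm id)).sum : ℝ) := by
  set K1 := Real.log ((b + 1 : ℕ) : ℝ) with hK1
  set K2 := Real.log ((4 * b : ℕ) : ℝ) with hK2
  have hK1p : 0 < K1 := Real.log_pos (by exact_mod_cast (by omega : 1 < b + 1))
  have hK2p : 0 < K2 := Real.log_pos (by exact_mod_cast (by omega : 1 < 4 * b))
  refine ⟨1 / (24 * K1), by positivity, ?_⟩
  have t1 : Filter.Tendsto (fun n : ℕ => Real.log n) Filter.atTop Filter.atTop :=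
    Real.tendsto_log_atTop.comp tendsto_natCast_atTop_atTop
  have t2 := Real.tendsto_log_atTop.comp t1
  have t3 := Real.tendsto_log_atTop.comp t2
  filter_upwards [t1.eventually_ge_atTop (2 * K1), t1.eventually_ge_atTop 1,
    t1.eventually_ge_atTop (2 * K1 * ((4 * b : ℕ) : ℝ) ^ 3),
    t2.eventually_ge_atTop (2 * Real.log (2 * K1)), t2.eventually_ge_atTop 1,
    t3.eventually_ge_atTop (2 * Real.log (2 * K2)), t3.eventually_ge_atTop 0,
    Filter.eventually_ge_atTop 3] with n a1 a2 a3 a4 a5 a6 a7 hn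
  simp only [Function.comp_apply] at a4 a5 a6 a7
  set x := Real.log n with hx
  set L := Nat.log (b + 1) n with hLdef
  set y := Nat.log (4 * b) L with hydef
  have hL : (b + 1) ^ L ≤ n := Nat.pow_log_le_self _ (by omega)
  have hL2 : x ≤ (L + 1) * K1 := by
    have h : n ≤ (b + 1) ^ (L + 1) := (Nat.lt_pow_succ_log_self (by omega) _).le
    have h' : (n : ℝ) ≤ ((b + 1 : ℕ) : ℝ) ^ (L + 1) := by exact_mod_cast h
    have := Real.log_le_log (by exact_mod_cast (by omega : 0 < n)) h'
    rw [Real.log_pow] at this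
    push_cast at this ⊢
    simpa [hK1] using this
  have hL3 : x / (2 * K1) ≤ L := by
    rw [div_le_iff₀ (by positivity)]; nlinarith
  have hL4 : (4 * b) ^ 3 ≤ L := by
    have : ((4 * b : ℕ) : ℝ) ^ 3 ≤ L := by
      refine le_trans ?_ hL3
      rw [le_div_iff₀ (by positivity)]; linarith
    exact_mod_cast this
  have hL0 : 0 < L := lt_of_lt_of_le (by positivity) hL4
  have hy3 : 3 ≤ y := (Nat.le_log_iff_pow_le (by omega) (by omega)).2 hL4
  have hyL : (4 * b) ^ y ≤ L := Nat.pow_log_le_self _ (by omega)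
  have hyL2 : Real.log L ≤ (y + 1) * K2 := by
    have h : L ≤ (4 * b) ^ (y + 1) := (Nat.lt_pow_succ_log_self (by omega) _).le
    have h' : (L : ℝ) ≤ ((4 * b : ℕ) : ℝ) ^ (y + 1) := by exact_mod_cast h
    have := Real.log_le_log (by exact_mod_cast hL0) h'
    rw [Real.log_pow] at this
    push_cast at this ⊢
    simpa [hK2] using this
  obtain ⟨m, hm, hd, hle⟩ := exists_m b L y n hb hL hy3 hyL
  have hLl : Real.log x / 2 ≤ Real.log L := by
    have := Real.log_le_log (by positivity) hL3
    rw [Real.log_div (by positivity) (by positivity)] at this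
    linarith
  have hyy : Real.log (Real.log x) / 2 ≤ Real.log ((y + 1 : ℕ) : ℝ) := by
    have h1 : Real.log x / (2 * K2) ≤ ((y + 1 : ℕ) : ℝ) := by
      rw [div_le_iff₀ (by positivity)]; push_cast; nlinarith
    have := Real.log_le_log (by positivity) h1
    rw [Real.log_div (by positivity) (by positivity)] at this
    linarith
  have hpos : 0 < (Finset.Icc 1 n).lcm id := by
    rw [Nat.pos_iff_ne_zero, Ne, Finset.lcm_eq_zero_iff]
    simp
  have hs := sd_dvd b hb m hm _ hpos hd
  have hs' : (m : ℝ) ≤ ((Nat.digits b ((Finset.Icc 1 n).lcm id)).sum : ℝ) := by exact_mod_cast hs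
  refine le_trans ?_ hs'
  have h6 : (x / (2 * K1)) * (Real.log (Real.log x) / 2) ≤ 6 * m :=
    le_trans (mul_le_mul hL3 hyy (by positivity) (by positivity)) hle
  have e : (x / (2 * K1)) * (Real.log (Real.log x) / 2)
      = 6 * (1 / (24 * K1) * (x * Real.log (Real.log x))) := by
    field_simp; ring
  linarith

/-- For each integer `b ≥ 2` there is a constant `C > 0` (depending only on `b`)
such that `s_b(lcm(1,…,n)) > C * log n * log log log n` for every integer `n ≥ 3`. -/
theorem sum_digits_lcm_gt (b : ℕ) (hb : 2 ≤ b) :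
    ∃ C : ℝ, 0 < C ∧ ∀ n : ℕ, 3 ≤ n →
      C * Real.log n * Real.log (Real.log (Real.log n)) <
        ((Nat.digits b ((Finset.Icc 1 n).lcm id)).sum : ℝ) := by
  obtain ⟨C0, hC0, hev⟩ := eventually_bound b hb
  obtain ⟨N0, hN0⟩ := Filter.eventually_atTop.1 hev
  set g : ℕ → ℝ := fun n => Real.log n * Real.log (Real.log (Real.log n)) with hg
  set M : ℝ := ∑ n ∈ Finset.range N0, |g n| with hM
  have hM0 : 0 ≤ M := Finset.sum_nonneg fun _ _ => abs_nonneg _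
  refine ⟨min (C0 / 2) (1 / (M + 1)), by positivity, ?_⟩
  intro n hn
  rw [mul_assoc]
  change _ * g n < _
  have hs1 : (1 : ℝ) ≤ ((Nat.digits b ((Finset.Icc 1 n).lcm id)).sum : ℝ) := by
    have hpos : 0 < (Finset.Icc 1 n).lcm id := by
      rw [Nat.pos_iff_ne_zero, Ne, Finset.lcm_eq_zero_iff]
      simp
    have : 0 < (Nat.digits b ((Finset.Icc 1 n).lcm id)).sum := by
      by_contra h0
      have h0' : (Nat.digits b ((Finset.Icc 1 n).lcm id)).sum = 0 := by omega
      have hall := List.sum_eq_zero_iff.1 h0'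
      have hne := (Nat.digits_ne_nil_iff_ne_zero (b := b)).2 hpos.ne'
      exact Nat.getLast_digit_ne_zero b hpos.ne' (hall _ (List.getLast_mem hne))
    exact_mod_cast this
  have hC : 0 < min (C0 / 2) (1 / (M + 1)) := by positivity
  rcases le_or_gt (g n) 0 with h | h
  · exact lt_of_le_of_lt (mul_nonpos_of_nonneg_of_nonpos hC.le h) (by linarith)
  rcases Nat.lt_or_ge n N0 with hlt | hge
  · have h1 : g n ≤ M := (le_abs_self _).trans
      (Finset.single_le_sum (f := fun n => |g n|) (fun _ _ => abs_nonneg _)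
        (Finset.mem_range.2 hlt))
    calc _ ≤ 1 / (M + 1) * g n := by gcongr; exact min_le_right _ _
      _ < 1 := by rw [one_div, inv_mul_lt_iff₀ (by positivity)]; linarith
      _ ≤ _ := hs1
  · have h1 := hN0 n hge
    calc _ ≤ C0 / 2 * g n := by gcongr; exact min_le_left _ _
      _ < C0 * g n := by nlinarith
      _ ≤ _ := h1
end

section
/- For each real x ≥ 1, let m(x) be the greatest positive integer m such that φ(m) ≤ x, where φ is Euler's totient function. Then m(x) is asymptotically equivalent to e^γ · x · log log x as x → +∞, i.e., m(x) / (x · log log x) tends to e^γ as x → +∞, where γ is the Euler–Mascheroni constant. -/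
namespace MTP
open Finset Real
open ArithmeticFunction hiding log

/-- Mertens' first estimate for the von Mangoldt function. -/
lemma mertens_vonMangoldt : ∃ C : ℝ, ∀ N : ℕ, 1 ≤ N →
    |∑ n ∈ Ioc 0 N, vonMangoldt n / n - log N| ≤ C := by
  refine ⟨log 4 + 4 + 1, fun N hN => ?_⟩
  have hN0 : (0:ℝ) < N := by exact_mod_cast hN
  have h1 : log (N.factorial : ℝ) = ∑ n ∈ Ioc 0 N, vonMangoldt n * ((N / n : ℕ) : ℝ) := by
    rw [← sum_Ioc_mul_zeta_eq_sum, vonMangoldt_mul_zeta]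
    clear hN hN0
    induction N with
    | zero => simp
    | succ k ih =>
      rw [Finset.sum_Ioc_succ_top (by omega), ← ih, Nat.factorial_succ]
      push_cast
      rw [Real.log_mul (by positivity) (by positivity), ArithmeticFunction.log_apply]
      push_cast; ring
  have hup : log (N.factorial : ℝ) ≤ N * log N := by
    rw [← Real.log_pow]
    apply Real.log_le_log (by positivity)
    exact_mod_cast Nat.factorial_le_pow N
  have hlo := Stirling.le_log_factorial_stirling (n := N) (by omega)
  have hlogN : 0 ≤ log N := Real.log_nonneg (by exact_mod_cast hN)
  have hpi : 0 ≤ log (2 * Real.pi) := Real.log_nonneg (by linarith [Real.pi_gt_three])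
  have hpsi : ∑ n ∈ Ioc 0 N, vonMangoldt n ≤ (log 4 + 4) * N := by
    have := Chebyshev.psi_le_const_mul_self (x := N) hN0.le
    simpa [Chebyshev.psi] using this
  have hA : log (N.factorial : ℝ) ≤ N * ∑ n ∈ Ioc 0 N, vonMangoldt n / n := by
    rw [h1, Finset.mul_sum]
    apply Finset.sum_le_sum
    intro n hn
    have := Nat.cast_div_le (α := ℝ) (m := N) (n := n)
    calc _ ≤ vonMangoldt n * ((N:ℝ) / n) := by
          gcongr
      _ = _ := by ring
  have hB : N * ∑ n ∈ Ioc 0 N, vonMangoldt n / n - ∑ n ∈ Ioc 0 N, vonMangoldt n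
      ≤ log (N.factorial : ℝ) := by
    rw [h1, Finset.mul_sum, ← Finset.sum_sub_distrib]
    apply Finset.sum_le_sum
    intro n hn
    have hn0 : 0 < n := (Finset.mem_Ioc.1 hn).1
    have h : (N:ℝ) / n - 1 ≤ ((N / n : ℕ) : ℝ) := by
      rw [← Nat.floor_div_eq_div (K := ℝ)]
      exact (Nat.sub_one_lt_floor _).le
    calc _ = vonMangoldt n * ((N:ℝ) / n - 1) := by ring
      _ ≤ _ := by
          gcongr
  have h4 : 0 ≤ log 4 := Real.log_nonneg (by norm_num)
  rw [abs_le]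
  constructor
  · have : N * (-(log 4 + 4 + 1)) ≤ N * (∑ n ∈ Ioc 0 N, vonMangoldt n / n - log N) := by nlinarith
    exact le_of_mul_le_mul_left this hN0
  · have : N * (∑ n ∈ Ioc 0 N, vonMangoldt n / n - log N) ≤ N * (log 4 + 4 + 1) := by nlinarith
    exact le_of_mul_le_mul_left this hN0

/-- weight -/
noncomputable def w (n : ℕ) : ℝ := if n.Prime then log n / n else 0

lemma w_nonneg (n : ℕ) : 0 ≤ w n := by
  unfold w; split_ifs
  · exact div_nonneg (Real.log_natCast_nonneg n) (Nat.cast_nonneg n)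
  · exact le_rfl

lemma summable_nonprime : Summable (fun n : ℕ => if n.Prime then 0 else vonMangoldt n / n) := by
  have key : LSeriesSummable (fun n : ℕ => (((if n.Prime then 0 else vonMangoldt n : ℝ)) : ℂ)) 1 := by
    apply LSeriesSummable_of_sum_norm_bigO (r := 1/2) _ (by norm_num) (by norm_num)
    obtain ⟨C, hC⟩ := Chebyshev.psi_sub_theta_le_mul_sqrt
    apply Asymptotics.IsBigO.of_bound C
    filter_upwards with n
    have h := hC n
    rw [Chebyshev.psi_sub_theta_eq_sum_not_prime, Nat.floor_natCast, Finset.sum_filter] at h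
    rw [← Real.sqrt_eq_rpow, Real.norm_of_nonneg (Real.sqrt_nonneg _), Real.norm_of_nonneg (by positivity)]
    convert h using 1
    apply Finset.sum_congr rfl
    intro k hk
    rw [Complex.norm_real]
    split_ifs <;> simp_all [abs_of_nonneg vonMangoldt_nonneg]
  have := key.norm
  refine this.congr fun n => ?_
  rcases eq_or_ne n 0 with rfl | hn
  · simp
  · rw [LSeries.term_of_ne_zero hn]
    simp only [Complex.cpow_one, norm_div, Complex.norm_real, Complex.norm_natCast]
    split_ifs <;> simp [abs_of_nonneg vonMangoldt_nonneg]

lemma mertens_first : ∃ C : ℝ, 0 ≤ C ∧ ∀ N : ℕ, 1 ≤ N → |∑ n ∈ Ioc 0 N, w n - log N| ≤ C := by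
  obtain ⟨C, hC⟩ := mertens_vonMangoldt
  set S := ∑' n : ℕ, (if n.Prime then 0 else vonMangoldt n / n)
  have hnn : ∀ n : ℕ, 0 ≤ (if n.Prime then 0 else vonMangoldt n / n : ℝ) := by
    intro n; split_ifs
    · exact le_rfl
    · exact div_nonneg vonMangoldt_nonneg (Nat.cast_nonneg n)
  have hb : ∀ N : ℕ, 1 ≤ N → |∑ n ∈ Ioc 0 N, w n - log N| ≤ C + S := by
    intro N hN
    have h1 : ∑ n ∈ Ioc 0 N, vonMangoldt n / n = ∑ n ∈ Ioc 0 N, w n +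
        ∑ n ∈ Ioc 0 N, (if n.Prime then 0 else vonMangoldt n / n) := by
      rw [← Finset.sum_add_distrib]
      apply Finset.sum_congr rfl
      intro n _
      unfold w
      split_ifs with h
      · rw [vonMangoldt_apply_prime h]; ring
      · ring
    have h2 := summable_nonprime.sum_le_tsum (Ioc 0 N) (fun n _ => hnn n)
    have h3 := Finset.sum_nonneg (s := Ioc 0 N) (fun n _ => hnn n)
    have := abs_le.1 (hC N hN)
    rw [abs_le]; constructor <;> linarith
  exact ⟨C + S, (abs_nonneg _).trans (hb 1 le_rfl), hb⟩

/-- Abel's inequality. -/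
lemma abel_ineq (g f : ℕ → ℝ) (T : ℕ) (B : ℝ) 
    (hf : ∀ k, T ≤ k → f (k+1) ≤ f k) (hf0 : ∀ k, T ≤ k → 0 ≤ f k)
    (hg : ∀ K, T ≤ K → ∑ k ∈ Ico T K, g k ≤ B) (K : ℕ) (hK : T ≤ K) :
    ∑ k ∈ Ico T K, g k * f k ≤ B * f T := by
  have main : ∑ k ∈ Ico T K, g k * f k ≤ B * f T + (∑ k ∈ Ico T K, g k - B) * f K := by
    induction K, hK using Nat.le_induction with
    | base => simp
    | succ K hK ih =>
      have h1 := hg (K+1) (by omega)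
      rw [Finset.sum_Ico_succ_top hK] at h1 ⊢
      rw [Finset.sum_Ico_succ_top hK]
      have := hf K hK
      nlinarith
  have := hg K hK
  have := hf0 K hK
  nlinarith

/-- E k = ⌊e^k⌋ -/
noncomputable def E (k : ℕ) : ℕ := ⌊exp (k:ℝ)⌋₊

lemma E_mono : Monotone E := fun a b h => by
  unfold E; apply Nat.floor_mono; gcongr

lemma E_le (k : ℕ) : (E k : ℝ) ≤ exp k := Nat.floor_le (exp_pos _).le

lemma lt_E (k : ℕ) : exp k < E k + 1 := Nat.lt_floor_add_one _

lemma le_E (k : ℕ) : k + 1 ≤ E k := by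
  apply Nat.le_floor
  push_cast
  exact Real.add_one_le_exp _

lemma log_E (k : ℕ) : |log (E k) - k| ≤ 1 := by
  have h1 : (1:ℝ) ≤ E k := by exact_mod_cast (by have := le_E k; omega : 1 ≤ E k)
  have h2 := E_le k
  have h3 := lt_E k
  have h4 : log (E k) ≤ k := by
    rw [Real.log_le_iff_le_exp (by linarith)]; exact h2
  have h5 : (k:ℝ) - 1 ≤ log (E k) := by
    rw [Real.le_log_iff_exp_le (by linarith), Real.exp_sub]
    rw [div_le_iff₀ (exp_pos 1)]
    have : 2 ≤ exp 1 := by have := Real.add_one_le_exp 1; linarith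
    nlinarith
  rw [abs_le]; constructor <;> linarith

lemma Ioc_sum_split (F : ℕ → ℝ) (T K : ℕ) (h : T ≤ K) :
    ∑ n ∈ Ioc (E T) (E K), F n = ∑ k ∈ Ico T K, ∑ n ∈ Ioc (E k) (E (k+1)), F n := by
  induction K, h using Nat.le_induction with
  | base => simp
  | succ K hK ih =>
    rw [Finset.sum_Ico_succ_top hK, ← ih, Finset.sum_Ioc_consecutive]
    · exact E_mono hK
    · exact E_mono (by omega)

lemma block_bounds : ∃ C : ℝ, 0 ≤ C ∧ ∀ (f : ℝ → ℝ), AntitoneOn f (Set.Ioi 0) →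
    (∀ x, 0 < x → 0 ≤ f x) → ∀ T K : ℕ, 1 ≤ T → T ≤ K →
    |∑ n ∈ Ioc (E T) (E K), w n * f (log n) - ∑ k ∈ Ioc T K, f k| ≤ C * f T := by
  obtain ⟨C, hC0, hC⟩ := mertens_first
  refine ⟨2 * (C + 1) + 1, by linarith, fun f hf hf0 T K hT hTK => ?_⟩
  have hW : ∀ k, |∑ n ∈ Ioc 0 (E k), w n - k| ≤ C + 1 := by
    intro k
    have h1 := abs_le.1 (hC (E k) (by have := le_E k; omega))
    have h2 := abs_le.1 (log_E k)
    rw [abs_le]; constructor <;> linarith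
  set m : ℕ → ℝ := fun k => ∑ n ∈ Ioc (E k) (E (k+1)), w n with hm
  have hmn : ∀ k, 0 ≤ m k := fun k => Finset.sum_nonneg fun n _ => w_nonneg n
  have hpart : ∀ K, T ≤ K → |∑ k ∈ Ico T K, (m k - 1)| ≤ 2 * (C + 1) := by
    intro K hK
    have h1 : ∑ k ∈ Ico T K, (m k - 1) = 
        (∑ n ∈ Ioc 0 (E K), w n - K) - (∑ n ∈ Ioc 0 (E T), w n - T) := by
      rw [Finset.sum_sub_distrib, ← Ioc_sum_split _ _ _ hK, 
        ← Finset.sum_Ioc_consecutive w (Nat.zero_le (E T)) (E_mono hK)]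
      simp [Nat.cast_sub hK]; ring
    rw [h1]
    have h2 := abs_le.1 (hW K)
    have h3 := abs_le.1 (hW T)
    rw [abs_le]; constructor <;> linarith
  have hpos : ∀ k : ℕ, T ≤ k → (0:ℝ) < k := fun k hk => by exact_mod_cast (by omega : 0 < k)
  have hanti : ∀ k : ℕ, T ≤ k → f ((k+1 : ℕ):ℝ) ≤ f k := by
    intro k hk
    apply hf (hpos k hk) (hpos (k+1) (by omega))
    push_cast; linarith
  have hlogpos : ∀ k n, T ≤ k → n ∈ Ioc (E k) (E (k+1)) → (k:ℝ) ≤ log n ∧ log n ≤ ((k+1 : ℕ) : ℝ) := by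
    intro k n hk hn
    obtain ⟨h1, h2⟩ := Finset.mem_Ioc.1 hn
    have hn0 : (0:ℝ) < n := by exact_mod_cast (by omega : 0 < n)
    constructor
    · rw [Real.le_log_iff_exp_le hn0]
      exact (Nat.lt_of_floor_lt h1).le
    · rw [Real.log_le_iff_le_exp hn0]
      exact le_trans (by exact_mod_cast h2) (E_le (k+1))
  have hup : ∑ n ∈ Ioc (E T) (E K), w n * f (log n) ≤ ∑ k ∈ Ico T K, m k * f k := by
    rw [Ioc_sum_split _ _ _ hTK]
    apply Finset.sum_le_sum
    intro k hk
    have hTk := (Finset.mem_Ico.1 hk).1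
    rw [hm, Finset.sum_mul]
    apply Finset.sum_le_sum
    intro n hn
    apply mul_le_mul_of_nonneg_left _ (w_nonneg n)
    have := hlogpos k n hTk hn
    exact hf (hpos k hTk) (lt_of_lt_of_le (hpos k hTk) this.1) this.1
  have hlo : ∑ k ∈ Ico T K, m k * f ((k+1:ℕ):ℝ) ≤ ∑ n ∈ Ioc (E T) (E K), w n * f (log n) := by
    rw [Ioc_sum_split _ _ _ hTK]
    apply Finset.sum_le_sum
    intro k hk
    have hTk := (Finset.mem_Ico.1 hk).1
    rw [hm, Finset.sum_mul]
    apply Finset.sum_le_sum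
    intro n hn
    apply mul_le_mul_of_nonneg_left _ (w_nonneg n)
    have := hlogpos k n hTk hn
    exact hf (lt_of_lt_of_le (hpos k hTk) this.1) (hpos (k+1) (by omega)) this.2
  have hA := abel_ineq (fun k => m k - 1) (fun k => f k) T (2 * (C+1)) hanti
    (fun k hk => hf0 _ (hpos k hk)) (fun K hK => (abs_le.1 (hpart K hK)).2) K hTK
  have hB := abel_ineq (fun k => -(m k - 1)) (fun k => f ((k+1:ℕ):ℝ)) T (2 * (C+1)) 
    (fun k hk => hanti (k+1) (by omega))
    (fun k hk => hf0 _ (hpos (k+1) (by omega))) 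
    (fun K hK => by rw [Finset.sum_neg_distrib]; linarith [(abs_le.1 (hpart K hK)).1]) K hTK
  simp only [sub_mul, neg_mul, one_mul, Finset.sum_sub_distrib, Finset.sum_neg_distrib] at hA hB
  have hI : ∑ k ∈ Ioc T K, f k = ∑ k ∈ Ico T K, f ((k+1:ℕ):ℝ) := by
    rw [Finset.sum_Ico_add' (fun k : ℕ => f (k:ℝ)) T K 1]
    apply Finset.sum_congr _ (fun _ _ => rfl)
    ext k; simp only [Finset.mem_Ioc, Finset.mem_Ico]; omega
  have hJ : ∑ k ∈ Ico T K, f k ≤ ∑ k ∈ Ico T K, f ((k+1:ℕ):ℝ) + f T := by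
    have h1 : ∑ k ∈ Ico T (K+1), f k = ∑ k ∈ Ico T K, f k + f K := Finset.sum_Ico_succ_top hTK _
    have h2 : ∑ k ∈ Ico T (K+1), f k = f T + ∑ k ∈ Ico (T+1) (K+1), f k := 
      Finset.sum_eq_sum_Ico_succ_bot (by omega) _
    rw [Finset.sum_Ico_add' (fun k : ℕ => f (k:ℝ)) T K 1]
    have := hf0 K (hpos K hTK)
    linarith
  have hT1 := hanti T le_rfl
  have hT0 := hf0 T (hpos T le_rfl)
  rw [hI, abs_le]
  constructor
  · nlinarith
  · nlinarith


/-- The logarithm of the local Euler factor. -/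
noncomputable def Q (s : ℝ) (n : ℕ) : ℝ := if n.Prime then -log (1 - (n:ℝ)^(-s)) else 0

lemma hasSum_Q {s : ℝ} (hs : 1 < s) : HasSum (Q s) (log (∑' n : ℕ, 1 / (n:ℝ)^s)) := by
  let f : ℕ →*₀ ℝ :=
    { toFun := fun n => (n:ℝ)^(-s)
      map_zero' := by simp [Real.zero_rpow (by linarith : -s ≠ 0)]
      map_one' := by simp
      map_mul' := fun m n => by
        push_cast
        exact Real.mul_rpow (Nat.cast_nonneg m) (Nat.cast_nonneg n) }
  have hfv : ∀ n : ℕ, f n = (n:ℝ)^(-s) := fun n => rfl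
  have hsumm : Summable (fun n => f n) := by
    simpa [hfv] using Real.summable_nat_rpow.2 (by linarith : -s < -1)
  have hprod := EulerProduct.eulerProduct_completely_multiplicative_hasProd (f := f) hsumm.norm
  have hZ : (∑' n : ℕ, 1 / (n:ℝ)^s) = ∑' n, f n := by
    apply tsum_congr
    intro n
    rw [hfv, Real.rpow_neg (Nat.cast_nonneg n), one_div]
  have hZpos : 0 < ∑' n, f n := by
    refine hsumm.tsum_pos (fun n => ?_) 1 ?_
    · rw [hfv]; positivity
    · rw [hfv]; simp
  have hlt : ∀ p : Nat.Primes, 0 < 1 - f p := by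
    intro p
    rw [hfv]
    have : ((p:ℕ):ℝ)^(-s) < 1 :=
      Real.rpow_lt_one_of_one_lt_of_neg (by exact_mod_cast p.2.one_lt) (by linarith)
    linarith
  have h1 : HasSum (fun p : Nat.Primes => -log (1 - f p)) (log (∑' n, f n)) := by
    have := (Real.continuousAt_log hZpos.ne').tendsto.comp hprod
    refine this.congr fun S => ?_
    simp only [Function.comp]
    rw [Real.log_prod (fun p _ => (inv_pos.2 (hlt p)).ne')]
    simp [Real.log_inv]
  rw [hZ]
  have h2 : (fun p : Nat.Primes => -log (1 - f p)) = Q s ∘ (fun p : Nat.Primes => (p : ℕ)) := by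
    funext p
    have hp : Nat.Prime (p : ℕ) := p.2
    simp only [Q, Function.comp, hfv, if_pos hp]
  rw [h2] at h1
  have hinj : Function.Injective (fun p : Nat.Primes => (p : ℕ)) := Subtype.coe_injective
  rw [hinj.hasSum_iff] at h1
  · exact h1
  · intro n hn
    unfold Q
    rw [if_neg]
    intro hp
    exact hn ⟨⟨n, hp⟩, rfl⟩

lemma neg_log_bounds {x : ℝ} (h0 : 0 ≤ x) (h1 : x ≤ 1/2) :
    x ≤ -log (1 - x) ∧ -log (1-x) ≤ x + 2 * x^2 := by
  constructor
  · have := Real.log_le_sub_one_of_pos (by linarith : 0 < 1 - x); linarith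
  · have := Real.log_le_sub_one_of_pos (by apply inv_pos.2; linarith : 0 < (1 - x)⁻¹)
    rw [Real.log_inv] at this
    have h2 : (1-x)⁻¹ - 1 ≤ x + 2 * x^2 := by
      rw [sub_le_iff_le_add, inv_le_iff_one_le_mul₀ (by linarith)]
      nlinarith [mul_nonneg (sq_nonneg x) (by linarith : 0 ≤ 1 - 2*x)]
    linarith

lemma tail_fin : ∃ C : ℝ, ∀ δ : ℝ, 0 ≤ δ → ∀ T K : ℕ, 1 ≤ T → T ≤ K →
    |∑ n ∈ Ioc (E T) (E K), Q (1 + δ) n - ∑ k ∈ Ioc T K, exp (-δ * k) / k| ≤ C / T := by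
  obtain ⟨C, hC0, hC⟩ := block_bounds
  refine ⟨C + 2, fun δ hδ T K hT hTK => ?_⟩
  have hT0 : (0:ℝ) < T := by exact_mod_cast hT
  have hb := hC (fun u => exp (-δ * u) / u) (by
    intro a ha b hb hab
    have ha' : 0 < a := ha
    dsimp only
    gcongr ?_ / ?_
    apply Real.exp_le_exp.2
    nlinarith) (fun x hx => by positivity) T K hT hTK
  have hfT : exp (-δ * T) / T ≤ 1 / T := by
    gcongr
    apply Real.exp_le_one_iff.2
    nlinarith
  have hq : ∀ n ∈ Ioc (E T) (E K), w n * (exp (-δ * log n) / log n) ≤ Q (1+δ) n ∧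
      Q (1+δ) n ≤ w n * (exp (-δ * log n) / log n) + 2 * ((n:ℝ)^2)⁻¹ := by
    intro n hn
    unfold w Q
    split_ifs with hp
    · have hn0 : (0:ℝ) < n := by exact_mod_cast hp.pos
      have hn2 : (2:ℝ) ≤ n := by exact_mod_cast hp.two_le
      have hl : 0 < log n := Real.log_pos (by linarith)
      have e1 : log n / n * (exp (-δ * log n) / log n) = (n:ℝ)^(-(1+δ)) := by
        rw [neg_add, Real.rpow_add hn0, Real.rpow_neg_one, Real.rpow_def_of_pos hn0 (-δ)]
        rw [mul_comm (log n)]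
        field_simp
      have e2 : (n:ℝ)^(-(1+δ)) ≤ (n:ℝ)⁻¹ := by
        rw [← Real.rpow_neg_one]
        exact Real.rpow_le_rpow_of_exponent_le (by linarith) (by linarith)
      have e3 : (n:ℝ)⁻¹ ≤ 1/2 := by
        rw [one_div]; gcongr
      have e4 : 0 ≤ (n:ℝ)^(-(1+δ)) := by positivity
      have := neg_log_bounds e4 (e2.trans e3)
      rw [e1]
      refine ⟨this.1, this.2.trans ?_⟩
      rw [← inv_pow]
      gcongr
    · simp
  have hsq : ∑ n ∈ Ioc (E T) (E K), 2 * ((n:ℝ)^2)⁻¹ ≤ 2 / T := by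
    rw [← Finset.mul_sum, div_eq_mul_inv]
    have hE := le_E T
    have := sum_Ioc_inv_sq_le_sub (α := ℝ) (k := E T) (n := E K) (by omega) (E_mono hTK)
    have h2 : ((E T : ℝ))⁻¹ ≤ (T:ℝ)⁻¹ := by
      gcongr; omega
    have h3 : (0:ℝ) ≤ (E K : ℝ)⁻¹ := by positivity
    linarith
  have s1 := Finset.sum_le_sum fun n hn => (hq n hn).1
  have s2 := Finset.sum_le_sum fun n hn => (hq n hn).2
  rw [Finset.sum_add_distrib] at s2
  have hb' := abs_le.1 hb
  have hc : C * (exp (-δ * T) / T) ≤ C / T := by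
    calc _ ≤ C * (1 / T) := by gcongr
      _ = _ := by ring
  have h2T : 0 ≤ 2 / (T:ℝ) := by positivity
  rw [add_div, abs_le]
  constructor <;> linarith [hb'.1, hb'.2]

lemma tendsto_E : Filter.Tendsto E Filter.atTop Filter.atTop :=
  Filter.tendsto_atTop_mono (fun k => (Nat.le_succ k).trans (le_E k)) Filter.tendsto_id

open Filter Topology

lemma tail_inf : ∃ C : ℝ, ∀ δ : ℝ, 0 < δ → ∀ T : ℕ, 1 ≤ T → 
    |(log (∑' n : ℕ, 1 / (n:ℝ)^(1+δ)) + log (1 - exp (-δ))) 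
      - (∑ n ∈ Ioc 0 (E T), Q (1 + δ) n - ∑ k ∈ Ioc 0 T, exp (-δ * k) / k)| ≤ C / T := by
  obtain ⟨C, hC⟩ := tail_fin
  refine ⟨C, fun δ hδ T hT => ?_⟩
  have hQ0 : Q (1+δ) 0 = 0 := by simp [Q, Nat.not_prime_zero]
  have l1 : Tendsto (fun K => ∑ n ∈ Ioc 0 (E K), Q (1 + δ) n) atTop
      (𝓝 (log (∑' n : ℕ, 1 / (n:ℝ)^(1+δ)))) := by
    have := (hasSum_Q (by linarith : 1 < 1 + δ)).tendsto_sum_nat.comp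
      ((tendsto_add_atTop_nat 1).comp tendsto_E)
    refine this.congr fun K => ?_
    simp only [Function.comp]
    rw [Finset.sum_range_succ', hQ0, add_zero, Finset.range_eq_Ico,
      Finset.sum_Ico_add' (fun k => Q (1+δ) k) 0 _ 1]
    apply Finset.sum_congr _ (fun _ _ => rfl)
    ext k; simp only [Finset.mem_Ioc, Finset.mem_Ico]; omega
  have l2 : Tendsto (fun K : ℕ => ∑ k ∈ Ioc 0 K, exp (-δ * k) / k) atTop
      (𝓝 (-log (1 - exp (-δ)))) := by
    have hx : |exp (-δ)| < 1 := by
      rw [abs_of_pos (exp_pos _)]; exact Real.exp_lt_one_iff.2 (by linarith)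
    have := (Real.hasSum_pow_div_log_of_abs_lt_one hx).tendsto_sum_nat
    refine this.congr fun K => ?_
    have e : ∀ n : ℕ, exp (-δ) ^ (n+1) / ((n:ℝ)+1) = exp (-δ * (n+1 : ℕ)) / (n+1 : ℕ) := by
      intro n
      rw [← Real.exp_nat_mul]; push_cast; ring_nf
    simp only [e]
    rw [Finset.range_eq_Ico, Finset.sum_Ico_add' (fun k : ℕ => exp (-δ * k) / k) 0 _ 1]
    apply Finset.sum_congr _ (fun _ _ => rfl)
    ext k; simp only [Finset.mem_Ioc, Finset.mem_Ico]; omega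
  have l3 := ((l1.sub l2).sub_const
    (∑ n ∈ Ioc 0 (E T), Q (1 + δ) n - ∑ k ∈ Ioc 0 T, exp (-δ * k) / k)).abs
  rw [sub_neg_eq_add] at l3
  refine le_of_tendsto l3 ?_
  filter_upwards [eventually_ge_atTop T] with K hK
  have := hC δ hδ.le T K hT hK
  rw [← Finset.sum_Ioc_consecutive _ (Nat.zero_le (E T)) (E_mono hK),
    ← Finset.sum_Ioc_consecutive _ (Nat.zero_le T) hK]
  rw [add_sub_add_comm, add_sub_cancel_left]
  exact this

lemma mertens_E : ∃ C : ℝ, ∀ T : ℕ, 1 ≤ T → 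
    |∑ n ∈ Ioc 0 (E T), Q 1 n - (harmonic T : ℝ)| ≤ C / T := by
  obtain ⟨C, hC⟩ := tail_inf
  refine ⟨C, fun T hT => ?_⟩
  have hid : Tendsto (fun δ : ℝ => δ) (𝓝[>] 0) (𝓝 0) := tendsto_nhdsWithin_of_tendsto_nhds tendsto_id
  have h1 : Tendsto (fun δ : ℝ => log (∑' n : ℕ, 1 / (n:ℝ)^(1+δ)) + log (1 - exp (-δ))) (𝓝[>] 0) (𝓝 0) := by
    have a1 : Tendsto (fun δ : ℝ => 1 + δ) (𝓝[>] 0) (𝓝[>] 1) := by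
      apply tendsto_nhdsWithin_of_tendsto_nhds_of_eventually_within
      · simpa using hid.const_add 1
      · filter_upwards [self_mem_nhdsWithin] with δ hδ
        have : 0 < δ := hδ
        simp [this]
    have a2 := tendsto_sub_mul_tsum_nat_rpow.comp a1
    have a3 : Tendsto (fun δ : ℝ => (1 - exp (-δ)) / δ) (𝓝[>] 0) (𝓝 1) := by
      have hd : HasDerivAt (fun δ : ℝ => 1 - exp (-δ)) 1 0 := by
        have := ((hasDerivAt_neg (0:ℝ)).exp).const_sub 1
        simpa using this
      have := hd.tendsto_slope_zero_right
      refine this.congr fun δ => ?_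
      simp [div_eq_inv_mul]
    have a4 := (a2.mul a3).log (by norm_num)
    rw [mul_one, Real.log_one] at a4
    refine a4.congr' ?_
    filter_upwards [self_mem_nhdsWithin] with δ hδ
    have hδ' : 0 < δ := hδ
    have hpos : 0 < ∑' n : ℕ, 1 / (n:ℝ)^(1+δ) := by
      refine (Real.summable_one_div_nat_rpow.2 (by linarith)).tsum_pos (fun n => by positivity) 1 (by simp)
    have hpos2 : 0 < 1 - exp (-δ) := by
      have : exp (-δ) < 1 := Real.exp_lt_one_iff.2 (by linarith)
      linarith
    rw [← Real.log_mul hpos.ne' hpos2.ne']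
    simp only [Function.comp]
    congr 1
    field_simp
    ring
  have h2 : Tendsto (fun δ : ℝ => ∑ n ∈ Ioc 0 (E T), Q (1 + δ) n) (𝓝[>] 0)
      (𝓝 (∑ n ∈ Ioc 0 (E T), Q 1 n)) := by
    apply tendsto_finsetSum
    intro n hn
    unfold Q
    split_ifs with hp
    · have hn0 : (0:ℝ) < n := by exact_mod_cast hp.pos
      have hn2 : (2:ℝ) ≤ n := by exact_mod_cast hp.two_le
      apply Tendsto.neg
      apply Tendsto.log
      · apply Tendsto.const_sub
        apply Tendsto.rpow tendsto_const_nhds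
        · simpa using (hid.const_add 1).neg
        · left; exact hn0.ne'
      · rw [Real.rpow_neg_one]
        have : (n:ℝ)⁻¹ ≤ 2⁻¹ := by gcongr
        norm_num at this ⊢
        intro h
        rw [sub_eq_zero] at h
        rw [← h] at this; norm_num at this
    · exact tendsto_const_nhds
  have h3 : Tendsto (fun δ : ℝ => ∑ k ∈ Ioc 0 T, exp (-δ * k) / k) (𝓝[>] 0) (𝓝 (harmonic T : ℝ)) := by
    have : (harmonic T : ℝ) = ∑ k ∈ Ioc 0 T, exp (-0 * k) / k := by
      rw [harmonic_eq_sum_Icc]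
      push_cast
      simp
      rfl
    rw [this]
    apply tendsto_finsetSum
    intro n hn
    apply Tendsto.div_const
    exact (Real.continuous_exp.tendsto _).comp (hid.neg.mul_const _)
  have h4 := (h1.sub (h2.sub h3)).abs
  rw [zero_sub, abs_neg] at h4
  refine le_of_tendsto h4 ?_
  filter_upwards [self_mem_nhdsWithin] with δ hδ
  exact hC δ hδ T hT

/-- `P N = ∑_{p ≤ N} -log (1 - 1/p)` -/
noncomputable def P (N : ℕ) : ℝ := ∑ n ∈ Ioc 0 N, Q 1 n

lemma Q_nonneg (n : ℕ) : 0 ≤ Q 1 n := by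
  unfold Q
  split_ifs with hp
  · have hn2 : (2:ℝ) ≤ n := by exact_mod_cast hp.two_le
    rw [Real.rpow_neg_one]
    have h1 : (n:ℝ)⁻¹ ≤ 2⁻¹ := by gcongr
    have h2 : 0 ≤ (n:ℝ)⁻¹ := by positivity
    exact h2.trans (neg_log_bounds h2 (by simpa using h1)).1
  · exact le_rfl

lemma P_mono : Monotone P := fun a b h => by
  apply Finset.sum_le_sum_of_subset_of_nonneg
  · exact Finset.Ioc_subset_Ioc_right h
  · intro n _ _; exact Q_nonneg n

lemma P_E : Tendsto (fun T : ℕ => P (E T) - log T) atTop (𝓝 eulerMascheroniConstant) := by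
  obtain ⟨C, hC⟩ := mertens_E
  have h1 : Tendsto (fun T : ℕ => P (E T) - (harmonic T : ℝ)) atTop (𝓝 0) := by
    apply squeeze_zero_norm' (a := fun T : ℕ => C / T)
    · filter_upwards [eventually_ge_atTop 1] with T hT
      exact hC T hT
    · exact tendsto_const_div_atTop_nhds_zero_nat C
  have := h1.add tendsto_harmonic_sub_log
  rw [zero_add] at this
  refine this.congr fun T => by ring

/-- Mertens' third theorem, logarithmic form. -/
lemma mertens_third : Tendsto (fun y : ℝ => P ⌊y⌋₊ - log (log y)) atTop
    (𝓝 eulerMascheroniConstant) := by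
  have hfl : Tendsto (fun y : ℝ => ⌊log y⌋₊) atTop atTop := tendsto_nat_floor_atTop.comp Real.tendsto_log_atTop
  have hlog : Tendsto (fun T : ℕ => log ((T:ℝ)+1) - log T) atTop (𝓝 0) := by
    have h : Tendsto (fun T : ℕ => log (1 + 1 / (T:ℝ))) atTop (𝓝 0) := by
      have : Tendsto (fun T : ℕ => 1 + 1 / (T:ℝ)) atTop (𝓝 (1 + 0)) :=
        tendsto_one_div_atTop_nhds_zero_nat.const_add 1
      have := this.log (by norm_num)
      simpa using this
    refine h.congr' ?_
    filter_upwards [eventually_ge_atTop 1] with T hT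
    have : (0:ℝ) < T := by exact_mod_cast hT
    rw [← Real.log_div (by positivity) (by positivity)]
    congr 1; field_simp
  have lo : Tendsto (fun y : ℝ => (P (E ⌊log y⌋₊) - log ⌊log y⌋₊) - (log ((⌊log y⌋₊:ℝ)+1) - log ⌊log y⌋₊))
      atTop (𝓝 eulerMascheroniConstant) := by
    have := (P_E.sub hlog).comp hfl
    rw [sub_zero] at this
    exact this
  have hi : Tendsto (fun y : ℝ => (P (E (⌊log y⌋₊+1)) - log ((⌊log y⌋₊+1 : ℕ):ℝ)) + (log ((⌊log y⌋₊:ℝ)+1) - log ⌊log y⌋₊))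
      atTop (𝓝 eulerMascheroniConstant) := by
    have := ((P_E.comp (tendsto_add_atTop_nat 1)).add hlog).comp hfl
    rw [add_zero] at this
    exact this
  refine tendsto_of_tendsto_of_tendsto_of_le_of_le' lo hi ?_ ?_
  · filter_upwards [eventually_ge_atTop (exp 1)] with y hy
    have hy0 : 0 < y := (exp_pos 1).trans_le hy
    have hl : 1 ≤ log y := (Real.le_log_iff_exp_le hy0).2 hy
    have h1 : P (E ⌊log y⌋₊) ≤ P ⌊y⌋₊ := by
      apply P_mono
      apply Nat.floor_mono
      rw [← Real.le_log_iff_exp_le hy0]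
      exact Nat.floor_le (by linarith)
    have h2 : log (log y) ≤ log ((⌊log y⌋₊:ℝ)+1) :=
      Real.log_le_log (by linarith) (Nat.lt_floor_add_one _).le
    linarith
  · filter_upwards [eventually_ge_atTop (exp 1)] with y hy
    have hy0 : 0 < y := (exp_pos 1).trans_le hy
    have hl : 1 ≤ log y := (Real.le_log_iff_exp_le hy0).2 hy
    have h1 : P ⌊y⌋₊ ≤ P (E (⌊log y⌋₊ + 1)) := by
      apply P_mono
      apply Nat.floor_mono
      rw [← Real.log_le_iff_le_exp hy0]
      push_cast
      exact (Nat.lt_floor_add_one _).le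
    have hf1 : 1 ≤ ⌊log y⌋₊ := Nat.le_floor (by simpa using hl)
    have h2 : log (⌊log y⌋₊:ℝ) ≤ log (log y) :=
      Real.log_le_log (by exact_mod_cast hf1) (Nat.floor_le (by linarith))
    push_cast
    linarith

lemma totient_eq_exp (m : ℕ) :
    (Nat.totient m : ℝ) = m * exp (-∑ p ∈ m.primeFactors, Q 1 p) := by
  have h := Nat.totient_eq_mul_prod_factors m
  have h' : (Nat.totient m : ℝ) = m * ∏ p ∈ m.primeFactors, (1 - (p:ℝ)⁻¹) := by
    have := congrArg (fun q : ℚ => (q : ℝ)) h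
    push_cast at this
    exact this
  rw [h', ← Finset.sum_neg_distrib, Real.exp_sum]
  congr 1
  apply Finset.prod_congr rfl
  intro p hp
  have hpp := Nat.prime_of_mem_primeFactors hp
  have hn2 : (2:ℝ) ≤ p := by exact_mod_cast hpp.two_le
  have h1 : (p:ℝ)⁻¹ ≤ 2⁻¹ := by gcongr
  unfold Q
  rw [if_pos hpp, neg_neg, Real.rpow_neg_one, Real.exp_log]
  norm_num at h1 ⊢
  linarith

lemma Q_le {p : ℕ} (hp : p.Prime) : Q 1 p ≤ 2 / p := by
  have hn2 : (2:ℝ) ≤ p := by exact_mod_cast hp.two_le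
  have h1 : (p:ℝ)⁻¹ ≤ 2⁻¹ := by gcongr
  have h0 : 0 ≤ (p:ℝ)⁻¹ := by positivity
  unfold Q
  rw [if_pos hp, Real.rpow_neg_one]
  have := (neg_log_bounds h0 (by simpa using h1)).2
  rw [div_eq_mul_inv]
  nlinarith

lemma sum_Q_le (n : ℕ) (hn : n ≠ 0) (hy : 1 < log n) :
    ∑ p ∈ n.primeFactors, Q 1 p ≤ P ⌊log n⌋₊ + 2 / log (log n) := by
  set y := log (n:ℝ) with hyd
  have hly : 0 < log y := Real.log_pos hy
  have hn0 : (0:ℝ) < n := by exact_mod_cast Nat.pos_of_ne_zero hn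
  rw [← Finset.sum_filter_add_sum_filter_not n.primeFactors (fun p => p ≤ ⌊y⌋₊)]
  apply add_le_add
  · apply Finset.sum_le_sum_of_subset_of_nonneg
    · intro p hp
      rw [Finset.mem_filter] at hp
      exact Finset.mem_Ioc.2 ⟨(Nat.prime_of_mem_primeFactors hp.1).pos, hp.2⟩
    · intro p _ _; exact Q_nonneg p
  · set S := n.primeFactors.filter (fun p => ¬ p ≤ ⌊y⌋₊)
    have hS : ∀ p ∈ S, p.Prime ∧ y ≤ p := by
      intro p hp
      rw [Finset.mem_filter] at hp
      refine ⟨Nat.prime_of_mem_primeFactors hp.1, ?_⟩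
      exact (Nat.lt_of_floor_lt (not_le.1 hp.2)).le
    have h1 : ∑ p ∈ S, Q 1 p ≤ (S.card : ℝ) * (2 / y) := by
      rw [← nsmul_eq_mul]
      apply Finset.sum_le_card_nsmul
      intro p hp
      refine (Q_le (hS p hp).1).trans ?_
      have := (hS p hp).2
      gcongr
    have h2 : (S.card : ℝ) * log y ≤ y := by
      calc (S.card : ℝ) * log y ≤ ∑ p ∈ S, log (p:ℝ) := by
            rw [← nsmul_eq_mul]
            apply Finset.card_nsmul_le_sum
            intro p hp
            exact Real.log_le_log (by linarith) (hS p hp).2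
        _ ≤ ∑ p ∈ n.primeFactors, log (p:ℝ) := by
            apply Finset.sum_le_sum_of_subset_of_nonneg (Finset.filter_subset _ _)
            intro p _ _; exact Real.log_natCast_nonneg p
        _ = log ((∏ p ∈ n.primeFactors, p : ℕ) : ℝ) := by
            push_cast
            rw [Real.log_prod]
            intro p hp
            exact_mod_cast (Nat.prime_of_mem_primeFactors hp).ne_zero
        _ ≤ y := by
            apply Real.log_le_log
            · exact_mod_cast Finset.prod_pos fun p hp => (Nat.prime_of_mem_primeFactors hp).pos
            · exact_mod_cast Nat.le_of_dvd (Nat.pos_of_ne_zero hn) (Nat.prod_primeFactors_dvd n)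
    refine h1.trans ?_
    rw [mul_div_assoc', div_le_div_iff₀ (by linarith) hly]
    nlinarith

lemma exists_large (x : ℝ) (hx : 1 ≤ x) (a : ℕ) : ∃ m : ℕ,
    (Nat.totient m : ℝ) ≤ x ∧ x * exp (P a) - 4 ^ a ≤ m := by
  set N := primorial a with hN
  have hN0 : (0:ℝ) < N := by exact_mod_cast primorial_pos a
  have hN4 : (N:ℝ) ≤ 4 ^ a := by exact_mod_cast primorial_le_four_pow a
  set k := ⌊x * exp (P a) / N⌋₊ with hk
  have hk1 : (k:ℝ) ≤ x * exp (P a) / N := Nat.floor_le (by positivity)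
  have hk2 : x * exp (P a) / N - 1 < k := Nat.sub_one_lt_floor _
  refine ⟨N * k, ?_, ?_⟩
  · rcases Nat.eq_zero_or_pos k with h0 | h0
    · rw [h0]; simp; linarith
    · rw [totient_eq_exp]
      have hPa : P a ≤ ∑ p ∈ (N * k).primeFactors, Q 1 p := by
        have e : P a = ∑ n ∈ (Ioc 0 a).filter Nat.Prime, Q 1 n := by
          unfold P
          rw [Finset.sum_filter]
          apply Finset.sum_congr rfl
          intro n _
          unfold Q
          split_ifs <;> rfl
        rw [e]
        apply Finset.sum_le_sum_of_subset_of_nonneg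
        · intro p hp
          rw [Finset.mem_filter, Finset.mem_Ioc] at hp
          rw [Nat.mem_primeFactors]
          refine ⟨hp.2, Dvd.dvd.mul_right ?_ k, ?_⟩
          · rw [hN, primorial]
            apply Finset.dvd_prod_of_mem (fun p => p)
            rw [Finset.mem_filter, Finset.mem_range]
            exact ⟨by omega, hp.2⟩
          · exact (Nat.mul_pos (primorial_pos a) h0).ne'
        · intro p _ _; exact Q_nonneg p
      push_cast
      calc (N:ℝ) * k * exp (-∑ p ∈ (N * k).primeFactors, Q 1 p)
          ≤ N * (x * exp (P a) / N) * exp (-P a) := by gcongr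
        _ = x * (exp (P a) * exp (-P a)) := by field_simp
        _ = x := by rw [← Real.exp_add]; simp
  · push_cast
    have : (N:ℝ) * (x * exp (P a) / N - 1) ≤ N * k := by gcongr
    have e : (N:ℝ) * (x * exp (P a) / N - 1) = x * exp (P a) - N := by field_simp
    linarith

end MTP

open MTP Filter Topology in
/-- If `M x` is the greatest positive integer `m` with `φ(m) ≤ x` (for `x ≥ 1`),
then `M x ∼ e^γ · x · log log x` as `x → +∞`. -/
theorem max_totient_preimage_asymptotic (M : ℝ → ℕ)
    (hM : ∀ x : ℝ, 1 ≤ x →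
      0 < M x ∧ (Nat.totient (M x) : ℝ) ≤ x ∧
        ∀ m : ℕ, 0 < m → (Nat.totient m : ℝ) ≤ x → m ≤ M x) :
    Filter.Tendsto (fun x : ℝ => (M x : ℝ) / (x * Real.log (Real.log x)))
      Filter.atTop (nhds (Real.exp Real.eulerMascheroniConstant)) := by
  have hll : Tendsto (fun x : ℝ => Real.log (Real.log x)) atTop atTop :=
    Real.tendsto_log_atTop.comp Real.tendsto_log_atTop
  have hc : ∀ c : ℝ, Tendsto (fun x : ℝ => c / Real.log (Real.log x)) atTop (𝓝 0) :=
    fun c => hll.const_div_atTop c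
  have hMtop : Tendsto (fun x : ℝ => (M x : ℝ)) atTop atTop := by
    refine tendsto_natCast_atTop_atTop.comp (tendsto_atTop_mono' _ ?_ tendsto_nat_floor_atTop)
    filter_upwards [eventually_ge_atTop 1] with x hx
    refine (hM x hx).2.2 _ (Nat.floor_pos.2 hx) ?_
    exact le_trans (by exact_mod_cast Nat.totient_le _) (Nat.floor_le (by linarith))
  -- the upper bound
  set U : ℝ → ℝ := fun n => Real.exp (P ⌊Real.log n⌋₊ - Real.log (Real.log (Real.log n)) +
    2 / Real.log (Real.log n)) with hU
  have hUlim : Tendsto U atTop (𝓝 (Real.exp Real.eulerMascheroniConstant)) := by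
    have h1 := (mertens_third.comp Real.tendsto_log_atTop).add (hc 2)
    rw [add_zero] at h1
    exact (Real.continuous_exp.tendsto _).comp h1
  have hUn : ∀ᶠ n : ℝ in atTop, U n * Real.log (Real.log n) ≤ n ^ (1/2 : ℝ) := by
    have hlit := (isLittleO_log_rpow_atTop (by norm_num : (0:ℝ) < 1/2)).bound
      (by positivity : 0 < (Real.exp Real.eulerMascheroniConstant + 1)⁻¹)
    filter_upwards [hlit, hUlim.eventually_le_const (lt_add_one _),
      Real.tendsto_log_atTop.eventually_ge_atTop 1, eventually_ge_atTop 1] with n h1 h2 h3 h4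
    rw [Real.norm_of_nonneg (by linarith), Real.norm_of_nonneg (by positivity),
      inv_mul_eq_div, le_div_iff₀ (by positivity)] at h1
    have h5 : Real.log (Real.log n) ≤ Real.log n := by
      have := Real.log_le_sub_one_of_pos (by linarith : 0 < Real.log n); linarith
    have h6 : 0 ≤ Real.log (Real.log n) := Real.log_nonneg h3
    calc U n * Real.log (Real.log n)
        ≤ (Real.exp Real.eulerMascheroniConstant + 1) * Real.log n := by gcongr
      _ ≤ _ := by linarith
  have hup : ∀ᶠ x : ℝ in atTop, (M x : ℝ) / (x * Real.log (Real.log x)) ≤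
      U (M x) * (1 + Real.log 2 / Real.log (Real.log x)) := by
    filter_upwards [eventually_ge_atTop 1, hll.eventually_gt_atTop 0,
      Real.tendsto_log_atTop.eventually_gt_atTop 1, hMtop.eventually hUn,
      (Real.tendsto_log_atTop.comp hMtop).eventually_gt_atTop 1] with x hx hlx hlx1 hUM hlM
    simp only [Function.comp] at hlM
    obtain ⟨hm0, hm1, -⟩ := hM x hx
    set n := M x with hn
    have hn0 : (0:ℝ) < n := by exact_mod_cast hm0
    have hlly : 0 < Real.log (Real.log n) := Real.log_pos hlM
    have hsum := sum_Q_le n hm0.ne' hlM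
    have hUe : U n * Real.log (Real.log n) = 
        Real.exp (P ⌊Real.log n⌋₊ + 2 / Real.log (Real.log n)) := by
      rw [hU]
      dsimp only
      rw [sub_add_eq_add_sub, Real.exp_sub, Real.exp_log hlly]
      field_simp
    have hnx : (n:ℝ) ≤ x * (U n * Real.log (Real.log n)) := by
      rw [hUe]
      rw [totient_eq_exp] at hm1
      calc (n:ℝ) = n * Real.exp (-∑ p ∈ n.primeFactors, Q 1 p) * 
            Real.exp (∑ p ∈ n.primeFactors, Q 1 p) := by
            rw [mul_assoc, ← Real.exp_add]; simp
        _ ≤ _ := by gcongr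
    have hsq : (n:ℝ) ≤ x ^ 2 := by
      have h1 : (n:ℝ) ≤ x * (n:ℝ)^(1/2:ℝ) := hnx.trans (by gcongr)
      rw [← Real.sqrt_eq_rpow] at h1
      have h2 := Real.mul_self_sqrt hn0.le
      have h3 : 0 < √(n:ℝ) := Real.sqrt_pos.2 hn0
      have h4 : √(n:ℝ) ≤ x := by
        by_contra hcon
        push Not at hcon
        nlinarith
      nlinarith
    have hlog : Real.log (Real.log n) ≤ Real.log 2 + Real.log (Real.log x) := by
      rw [← Real.log_mul (by norm_num) (by linarith)]
      apply Real.log_le_log (by linarith)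
      have := Real.log_le_log hn0 hsq
      rwa [Real.log_pow] at this
    rw [div_le_iff₀ (by positivity)]
    have hUpos : 0 < U n := Real.exp_pos _
    calc (n:ℝ) ≤ x * (U n * Real.log (Real.log n)) := hnx
      _ ≤ x * (U n * (Real.log 2 + Real.log (Real.log x))) := by gcongr
      _ = _ := by field_simp; ring
  have hupl : Tendsto (fun x : ℝ => U (M x) * (1 + Real.log 2 / Real.log (Real.log x))) atTop
      (𝓝 (Real.exp Real.eulerMascheroniConstant)) := by
    have := (hUlim.comp hMtop).mul ((hc (Real.log 2)).const_add 1)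
    rw [add_zero, mul_one] at this
    exact this
  -- the lower bound
  set L : ℝ → ℝ := fun y => Real.exp (P ⌊y⌋₊ - Real.log (Real.log y)) with hL
  have hLlim : Tendsto L atTop (𝓝 (Real.exp Real.eulerMascheroniConstant)) :=
    (Real.continuous_exp.tendsto _).comp mertens_third
  have hhalf : Tendsto (fun x : ℝ => Real.log x / 2) atTop atTop :=
    Real.tendsto_log_atTop.atTop_div_const (by norm_num)
  have hlol : Tendsto (fun x : ℝ => L (Real.log x / 2) * (1 - Real.log 2 / Real.log (Real.log x))
      - 1 / Real.log (Real.log x)) atTop (𝓝 (Real.exp Real.eulerMascheroniConstant)) := by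
    have := ((hLlim.comp hhalf).mul ((hc (Real.log 2)).const_sub 1)).sub (hc 1)
    rw [sub_zero, sub_zero, mul_one] at this
    exact this
  have hlo : ∀ᶠ x : ℝ in atTop, L (Real.log x / 2) * (1 - Real.log 2 / Real.log (Real.log x))
      - 1 / Real.log (Real.log x) ≤ (M x : ℝ) / (x * Real.log (Real.log x)) := by
    filter_upwards [eventually_ge_atTop 1, hll.eventually_gt_atTop 0,
      hhalf.eventually_gt_atTop 1] with x hx hlx hy
    have hx0 : 0 < x := by linarith
    obtain ⟨m, hm1, hm2⟩ := exists_large x hx ⌊Real.log x / 2⌋₊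
    have hmM : (m:ℝ) ≤ M x := by
      rcases Nat.eq_zero_or_pos m with h0 | h0
      · rw [h0]; simp
      · exact_mod_cast (hM x hx).2.2 m h0 hm1
    have h4 : (4:ℝ) ^ ⌊Real.log x / 2⌋₊ ≤ x := by
      rw [← Real.log_le_log_iff (by positivity) hx0, Real.log_pow]
      have e4 : Real.log 4 = 2 * Real.log 2 := by
        rw [show (4:ℝ) = 2^2 by norm_num, Real.log_pow]; norm_num
      have hf : (⌊Real.log x / 2⌋₊ : ℝ) ≤ Real.log x / 2 := Nat.floor_le (by linarith)
      have hl2 : Real.log 2 ≤ 1 := by linarith [Real.log_two_lt_d9]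
      have hl20 : 0 ≤ Real.log 2 := by linarith [Real.log_two_gt_d9]
      rw [e4]
      nlinarith
    have hLe : L (Real.log x / 2) * (Real.log (Real.log x) - Real.log 2) =
        Real.exp (P ⌊Real.log x / 2⌋₊) := by
      rw [← Real.log_div (by linarith) (by norm_num), hL]
      dsimp only
      rw [Real.exp_sub, Real.exp_log (Real.log_pos hy)]
      have := (Real.log_pos hy).ne'
      field_simp
    rw [le_div_iff₀ (by positivity)]
    calc (L (Real.log x / 2) * (1 - Real.log 2 / Real.log (Real.log x))
          - 1 / Real.log (Real.log x)) * (x * Real.log (Real.log x))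
        = x * (L (Real.log x / 2) * (Real.log (Real.log x) - Real.log 2)) - x := by
          field_simp
      _ = x * Real.exp (P ⌊Real.log x / 2⌋₊) - x := by rw [hLe]
      _ ≤ M x := by linarith
  exact tendsto_of_tendsto_of_tendsto_of_le_of_le' hlol hupl hlo hup
end
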